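/- arXiv:1412.0562 — 2 statements merged into one kernel-verified Lean document; each statement's English description precedes it below -/
import Mathlib

section
/- Let $D \subseteq \mathbb{C}^n$ be a domain with Lipschitz boundary. Then for every boundary point $P \in \partial D$ there is an open neighbourhood $U$ of $P$ such that $D \cap U$ is an $\mathcal{S}$-domain with Lipschitz boundary; that is, for every plurisubharmonic function $u$ on $D \cap U$ there exists a sequence $(u_k)$ of smooth plurisubharmonic functions on $D \cap U$ decreasing pointwise to $u$. -/
open MeasureTheory Real Filter Topology Metric

noncomputable section

/-- Encoding of the circle mean `(2π)⁻¹ ∫₀^{2π} u(a+e^{iθ}b) dθ` for an `EReal`-valued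
(upper semicontinuous) function `u`, as the infimum of the means of the truncations
`max (u ·) (-m)`. -/
def circleMean {n : ℕ} (u : EuclideanSpace ℂ (Fin n) → EReal)
    (a b : EuclideanSpace ℂ (Fin n)) : EReal :=
  ⨅ m : ℕ, (((2 * π)⁻¹ *
      ∫ θ in (0:ℝ)..(2 * π),
        (u (a + Complex.exp ((θ : ℂ) * Complex.I) • b) ⊔ ((-(m : ℝ) : ℝ) : EReal)).toReal : ℝ)
      : EReal)

/-- `u : Ω → [-∞, ∞)` is plurisubharmonic on an open `Ω ⊆ ℂⁿ`. -/
def IsPSHOn {n : ℕ} (Ω : Set (EuclideanSpace ℂ (Fin n)))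
    (u : EuclideanSpace ℂ (Fin n) → EReal) : Prop :=
  UpperSemicontinuousOn u Ω ∧
  (∀ z ∈ Ω, u z ≠ ⊤) ∧
  (∀ z ∈ Ω, ∃ w ∈ connectedComponentIn Ω z, u w ≠ ⊥) ∧
  ∀ a b : EuclideanSpace ℂ (Fin n),
    (∀ l : ℂ, ‖l‖ ≤ 1 → a + l • b ∈ Ω) → u a ≤ circleMean u a b

/-- `D` is an `𝒮`-domain: a domain on which every plurisubharmonic function is the
pointwise limit of a decreasing sequence of smooth plurisubharmonic functions. -/
def IsSDomain {n : ℕ} (D : Set (EuclideanSpace ℂ (Fin n))) : Prop :=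
  IsOpen D ∧ IsConnected D ∧
  ∀ u : EuclideanSpace ℂ (Fin n) → EReal, IsPSHOn D u →
    ∃ v : ℕ → EuclideanSpace ℂ (Fin n) → ℝ,
      (∀ k, ContDiffOn ℝ (⊤ : ℕ∞) (v k) D) ∧
      (∀ k, IsPSHOn D (fun z => ((v k z : ℝ) : EReal))) ∧
      (∀ k, ∀ z ∈ D, v (k+1) z ≤ v k z) ∧
      (∀ z ∈ D, Tendsto (fun k => ((v k z : ℝ) : EReal)) atTop (nhds (u z)))

/-- `D ⊆ ℂⁿ` has Lipschitz boundary: near each boundary point, after a rigid motion of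
(the real) coordinates, the boundary is the graph of a Lipschitz function and the domain
is the region below the graph. -/
def HasLipschitzBoundary {n : ℕ} (D : Set (EuclideanSpace ℂ (Fin n))) : Prop :=
  ∀ p ∈ frontier D,
    ∃ (φ : EuclideanSpace ℂ (Fin n) ≃ᵢ WithLp 2 (EuclideanSpace ℝ (Fin (2*n-1)) × ℝ))
      (F : EuclideanSpace ℝ (Fin (2*n-1)) → ℝ) (L : NNReal)
      (V : Set (WithLp 2 (EuclideanSpace ℝ (Fin (2*n-1)) × ℝ))),
      LipschitzWith L F ∧ IsOpen V ∧ φ p ∈ V ∧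
      ∀ q ∈ V, (φ.symm q ∈ D ↔
        (WithLp.equiv 2 (EuclideanSpace ℝ (Fin (2*n-1)) × ℝ) q).2 <
          F (WithLp.equiv 2 (EuclideanSpace ℝ (Fin (2*n-1)) × ℝ) q).1)

/-!
An open set which is star-shaped with respect to a ball is an `𝒮`-domain: the suprema of a
plurisubharmonic `u` over the truncated cones which open from `z` towards the ball are continuous,
plurisubharmonic and decrease to `u z` as the cones shrink; averaging such a function over the
contractions towards the points of the ball makes it smooth while changing it little; and
regularised maxima glue the smooth functions obtained along a compact exhaustion.

Near a boundary point, being star-shaped with respect to a ball and lying below a Lipschitz graph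
are the same thing, both being an interior cone condition. So intersecting with a small box gives
a star-shaped set, and conversely every star-shaped set has Lipschitz boundary.
-/

namespace IsPSHOn

variable {n : ℕ} {Ω : Set (EuclideanSpace ℂ (Fin n))} {u : EuclideanSpace ℂ (Fin n) → EReal}
  {a b : EuclideanSpace ℂ (Fin n)}

lemma le_circleAverage_of_le (hu : IsPSHOn Ω u) (hab : ∀ l : ℂ, ‖l‖ ≤ 1 → a + l • b ∈ Ω)
    {h : ℂ → ℝ} (hh : ContinuousOn h (sphere 0 1))
    (hle : ∀ l : ℂ, ‖l‖ = 1 → u (a + l • b) ≤ h l) :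
    u a ≤ (circleAverage h 0 1 : ℝ) := by
  obtain ⟨c, hc⟩ := (isCompact_sphere (0 : ℂ) 1).bddBelow_image hh
  obtain ⟨m, hm⟩ := exists_nat_ge (-c)
  set f : ℂ → ℝ := fun l => (u (a + l • b) ⊔ ((-(m : ℝ) : ℝ) : EReal)).toReal with hf
  have norm_circleMap (θ : ℝ) : ‖circleMap 0 1 θ‖ = 1 := by simp
  have hbounds (l : ℂ) (hl : ‖l‖ = 1) : -(m : ℝ) ≤ f l ∧ f l ≤ h l := by
    have hlow : -(m : ℝ) ≤ h l := by
      linarith [hc (Set.mem_image_of_mem h (mem_sphere_zero_iff_norm.2 hl))]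
    have hup : u (a + l • b) ⊔ ((-(m : ℝ) : ℝ) : EReal) ≤ h l :=
      sup_le (hle l hl) (by exact_mod_cast hlow)
    have hcoe : (f l : EReal) = u (a + l • b) ⊔ ((-(m : ℝ) : ℝ) : EReal) :=
      EReal.coe_toReal (hup.trans_lt (EReal.coe_lt_top _)).ne
        ((EReal.bot_lt_coe _).trans_le le_sup_right).ne'
    rw [← EReal.coe_le_coe_iff, ← EReal.coe_le_coe_iff, hcoe]
    exact ⟨le_sup_right, hup⟩
  have h_integrable : CircleIntegrable h 0 1 := hh.circleIntegrable zero_le_one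
  have husc : UpperSemicontinuous fun θ : ℝ => u (a + circleMap 0 1 θ • b) := by
    rw [← upperSemicontinuousOn_univ_iff]
    exact hu.1.comp (by fun_prop) fun θ _ => hab _ (norm_circleMap θ).le
  have f_integrable : CircleIntegrable f 0 1 := by
    refine (intervalIntegrable_const.add h_integrable.abs).mono_fun'
      (g := fun θ => (m : ℝ) + |h (circleMap 0 1 θ)|)
      (husc.measurable.sup measurable_const).ereal_toReal.aestronglyMeasurable
      (Eventually.of_forall fun θ => ?_)
    obtain ⟨hlow, hup⟩ := hbounds _ (norm_circleMap θ)
    exact abs_le.2 ⟨by linarith [abs_nonneg (h (circleMap 0 1 θ))],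
      by linarith [le_abs_self (h (circleMap 0 1 θ)), (Nat.cast_nonneg m : (0 : ℝ) ≤ m)]⟩
  have hmean : circleAverage f 0 1 ≤ circleAverage h 0 1 :=
    circleAverage_mono f_integrable h_integrable fun l hl => (hbounds l (by simpa using hl)).2
  calc u a ≤ circleMean u a b := hu.2.2.2 a b hab
    _ ≤ (circleAverage f 0 1 : ℝ) := by
        refine (iInf_le _ m).trans_eq ?_
        simp only [circleAverage_def, circleMap, hf, Complex.ofReal_one, one_mul, zero_add,
          smul_eq_mul]
    _ ≤ (circleAverage h 0 1 : ℝ) := by exact_mod_cast hmean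

lemma eventually_lt (hu : IsPSHOn Ω u) (hΩ : IsOpen Ω) {q : EuclideanSpace ℂ (Fin n)}
    (hq : q ∈ Ω) {c : EReal} (hc : u q < c) : ∀ᶠ z in 𝓝 q, u z < c ∧ z ∈ Ω :=
  (hΩ.nhdsWithin_eq hq ▸ hu.1 q hq c hc).and (hΩ.mem_nhds hq)

lemma exists_le_coe_of_isCompact (hu : IsPSHOn Ω u) {K : Set (EuclideanSpace ℂ (Fin n))}
    (hK : IsCompact K) (hKΩ : K ⊆ Ω) : ∃ M : ℝ, ∀ z ∈ K, u z ≤ M := by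
  rcases K.eq_empty_or_nonempty with rfl | hne
  · exact ⟨0, by simp⟩
  obtain ⟨x, hxK, hx⟩ := (hu.1.mono hKΩ).exists_isMaxOn hne hK
  exact ⟨(u x).toReal, fun z hz => (hx hz).trans (EReal.le_coe_toReal (hu.2.1 x (hKΩ hxK)))⟩

end IsPSHOn

/-- The mean over the unit circle of the tent function `max 0 (1 - ‖l - 1‖ / δ)`, which is
supported in the arc `‖l - 1‖ ≤ δ`. -/
def arcWeight (δ : ℝ) : ℝ := circleAverage (fun l : ℂ => max 0 (1 - ‖l - 1‖ / δ)) 0 1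

lemma arcWeight_pos (δ : ℝ) : 0 < arcWeight δ := by
  have hpos : 0 < ∫ θ in (0 : ℝ)..2 * π, max 0 (1 - ‖circleMap 0 1 θ - 1‖ / δ) :=
    intervalIntegral.integral_pos (by positivity) (by fun_prop) (fun θ _ => le_max_left _ _)
      ⟨0, ⟨le_rfl, by positivity⟩, by simp [circleMap]⟩
  rw [arcWeight, circleAverage_def, smul_eq_mul]
  positivity

namespace IsPSHOn

variable {n : ℕ} {Ω : Set (EuclideanSpace ℂ (Fin n))} {u : EuclideanSpace ℂ (Fin n) → EReal}
  {a b : EuclideanSpace ℂ (Fin n)}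

lemma le_of_le_on_arc (hu : IsPSHOn Ω u) (hab : ∀ l : ℂ, ‖l‖ ≤ 1 → a + l • b ∈ Ω)
    {M c δ : ℝ} (hδ : 0 < δ) (hM : ∀ l : ℂ, ‖l‖ = 1 → u (a + l • b) ≤ M)
    (hc : ∀ l : ℂ, ‖l‖ = 1 → ‖l - 1‖ < δ → u (a + l • b) ≤ c) :
    u a ≤ ((arcWeight δ * c + (1 - arcWeight δ) * M : ℝ) : EReal) := by
  set φ : ℂ → ℝ := fun l => max 0 (1 - ‖l - 1‖ / δ)
  have : Continuous φ := by fun_prop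
  have hmean : circleAverage (fun l => M + (c - M) * φ l) 0 1
      = arcWeight δ * c + (1 - arcWeight δ) * M := by
    have hint : CircleIntegrable (fun l => (c - M) • φ l) 0 1 :=
      ContinuousOn.circleIntegrable zero_le_one (by fun_prop)
    have := circleAverage_fun_add (circleIntegrable_const M 0 1) hint
    rw [circleAverage_const, circleAverage_fun_smul] at this
    simp only [smul_eq_mul] at this
    rw [this, arcWeight]
    ring
  rw [← hmean]
  refine hu.le_circleAverage_of_le hab (by fun_prop) fun l hl => ?_
  rcases lt_or_ge ‖l - 1‖ δ with hlt | hge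
  · have hφ0 : 0 ≤ φ l := le_max_left _ _
    have hφ1 : φ l ≤ 1 := max_le zero_le_one (by linarith [div_nonneg (norm_nonneg (l - 1)) hδ.le])
    calc u (a + l • b) ≤ ((min c M : ℝ) : EReal) := by
          rw [EReal.coe_strictMono.monotone.map_min]
          exact le_min (hc l hl hlt) (hM l hl)
      _ ≤ ((M + (c - M) * φ l : ℝ) : EReal) := by
          rw [EReal.coe_le_coe_iff]
          nlinarith [min_le_left c M, min_le_right c M]
  · have hφ0 : φ l = 0 := max_eq_left (by linarith [(one_le_div hδ).2 hge])
    simpa [hφ0] using hM l hl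

lemma exists_le_coe_on_circle (hu : IsPSHOn Ω u) (hab : ∀ l : ℂ, ‖l‖ ≤ 1 → a + l • b ∈ Ω) :
    ∃ M : ℝ, ∀ l : ℂ, ‖l‖ = 1 → u (a + l • b) ≤ M := by
  obtain ⟨M, hM⟩ := hu.exists_le_coe_of_isCompact
    ((isCompact_sphere (0 : ℂ) 1).image (f := fun l => a + l • b) (by fun_prop))
    (Set.image_subset_iff.2 fun l hl => hab l (mem_sphere_zero_iff_norm.1 hl).le)
  exact ⟨M, fun l hl => hM _ ⟨l, mem_sphere_zero_iff_norm.2 hl, rfl⟩⟩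

lemma eq_bot_of_eq_bot_on_arc (hu : IsPSHOn Ω u) (hab : ∀ l : ℂ, ‖l‖ ≤ 1 → a + l • b ∈ Ω)
    {δ : ℝ} (hδ : 0 < δ) (hbot : ∀ l : ℂ, ‖l - 1‖ < δ → u (a + l • b) = ⊥) : u a = ⊥ := by
  obtain ⟨M, hM⟩ := hu.exists_le_coe_on_circle hab
  refine EReal.eq_bot_iff_forall_lt _ |>.2 fun y => ?_
  have hκ := arcWeight_pos δ
  have hle := hu.le_of_le_on_arc hab (c := (y - 1 - (1 - arcWeight δ) * M) / arcWeight δ) hδ hM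
    fun l _ hl => (hbot l hl).trans_le bot_le
  rw [mul_div_cancel₀ _ hκ.ne', sub_add_cancel] at hle
  exact hle.trans_lt (by exact_mod_cast sub_one_lt y)

lemma exists_ne_bot (hu : IsPSHOn Ω u) (hΩ : IsOpen Ω) {W : Set (EuclideanSpace ℂ (Fin n))}
    (hW : IsOpen W) (hWΩ : W ⊆ Ω) (hne : W.Nonempty) : ∃ w ∈ W, u w ≠ ⊥ := by
  by_contra! hbot
  obtain ⟨z₀, hz₀⟩ := hne
  set A := interior {z | u z = ⊥}
  suffices hsub : connectedComponentIn Ω z₀ ⊆ A by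
    obtain ⟨w, hw, hw_ne⟩ := hu.2.2.1 z₀ (hWΩ hz₀)
    exact hw_ne (interior_subset (hsub hw) : w ∈ {z | u z = ⊥})
  refine isPreconnected_connectedComponentIn.subset_of_closure_inter_subset isOpen_interior
    ⟨z₀, mem_connectedComponentIn (hWΩ hz₀), interior_maximal hbot hW hz₀⟩ ?_
  rintro z ⟨hzA, hz⟩
  obtain ⟨r, hr, hball⟩ := Metric.isOpen_iff.1 hΩ z (connectedComponentIn_subset _ _ hz)
  obtain ⟨w, hwA, hzw⟩ := Metric.mem_closure_iff.1 hzA (r / 4) (by positivity)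
  refine mem_interior.2 ⟨ball z (r / 4), fun x hx => ?_, isOpen_ball, mem_ball_self (by positivity)⟩
  have hdisc (l : ℂ) (hl : ‖l‖ ≤ 1) : x + l • (w - x) ∈ Ω := by
    refine hball (mem_ball.2 ?_)
    have hmove : dist (x + l • (w - x)) x ≤ dist w x := by
      rw [dist_self_add_left, norm_smul, dist_eq_norm]
      exact mul_le_of_le_one_left (norm_nonneg _) hl
    linarith [dist_triangle (x + l • (w - x)) x z, dist_triangle w z x, dist_comm w z,
      dist_comm z x, mem_ball.1 hx]
  have hnear : ∀ᶠ l : ℂ in 𝓝 1, x + l • (w - x) ∈ A :=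
    ContinuousAt.eventually_mem (by fun_prop)
      (by rw [one_smul, add_sub_cancel]; exact isOpen_interior.mem_nhds hwA)
  obtain ⟨δ, hδ, hδA⟩ := Metric.eventually_nhds_iff.1 hnear
  exact hu.eq_bot_of_eq_bot_on_arc hdisc hδ fun l hl =>
    (interior_subset (hδA (by rwa [dist_eq_norm])) : x + l • (w - x) ∈ {z | u z = ⊥})

/-- Convex open sets are not thin at their boundary points. -/
lemma le_on_closure_of_convex (hu : IsPSHOn Ω u) (hΩ : IsOpen Ω)
    {C : Set (EuclideanSpace ℂ (Fin n))} (hC : IsOpen C) (hconv : Convex ℝ C) {c : EReal}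
    (hc : ∀ z ∈ C, u z ≤ c) {q : EuclideanSpace ℂ (Fin n)} (hqC : q ∈ closure C) (hq : q ∈ Ω) :
    u q ≤ c := by
  obtain ⟨m, hm⟩ := closure_nonempty_iff.1 ⟨q, hqC⟩
  by_contra! hlt
  obtain ⟨c', hcc', hc'⟩ := EReal.lt_iff_exists_real_btwn.1 hlt
  obtain ⟨x, hx⟩ : ∃ x : ℝ, u q = x :=
    ⟨_, (EReal.coe_toReal (hu.2.1 q hq) (bot_le.trans_lt hlt).ne').symm⟩
  rw [hx, EReal.coe_lt_coe_iff] at hc'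
  have hnear : ∀ᶠ l : ℂ in 𝓝 1, q + l • (m - q) ∈ C :=
    ContinuousAt.eventually_mem (by fun_prop) (by simpa using hC.mem_nhds hm)
  obtain ⟨δ, hδ, hδC⟩ := Metric.eventually_nhds_iff.1 hnear
  have hκ := arcWeight_pos δ
  set M := x + arcWeight δ * (x - c') / 2 with hM
  have hxM : u q < M := by
    rw [hx, EReal.coe_lt_coe_iff, hM]
    linarith [mul_pos hκ (sub_pos.2 hc')]
  have hsmall : ∀ᶠ l : ℂ in 𝓝 0, u (q + l • (m - q)) < M ∧ q + l • (m - q) ∈ Ω :=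
    (Continuous.tendsto' (by fun_prop) 0 q (by simp)).eventually (hu.eventually_lt hΩ hq hxM)
  obtain ⟨ε, hε, hεM⟩ := Metric.eventually_nhds_iff.1 hsmall
  obtain ⟨ρ, hρ, hρ'⟩ := exists_between (lt_min hε one_pos)
  rw [lt_min_iff] at hρ'
  have hdisc (l : ℂ) (hl : ‖l‖ ≤ 1) :
      u (q + l • (ρ : ℂ) • (m - q)) < M ∧ q + l • (ρ : ℂ) • (m - q) ∈ Ω := by
    rw [smul_smul]
    refine hεM ?_
    rw [dist_zero_right, norm_mul, Complex.norm_of_nonneg hρ.le]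
    nlinarith
  have harc (l : ℂ) (hl : ‖l - 1‖ < δ) : q + l • (ρ : ℂ) • (m - q) ∈ C := by
    have hmem : q + l • (m - q) ∈ interior C :=
      hC.interior_eq.symm ▸ hδC (by rwa [dist_eq_norm])
    have := hconv.add_smul_sub_mem_interior' hqC hmem ⟨hρ, hρ'.2.le⟩
    rw [add_sub_cancel_left, hC.interior_eq] at this
    rwa [smul_comm, Complex.coe_smul]
  have hle := hu.le_of_le_on_arc (fun l hl => (hdisc l hl).2) hδ (fun l hl => (hdisc l hl.le).1.le)
    fun l _ hl => (hc _ (harc l hl)).trans hcc'.le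
  rw [hx, EReal.coe_le_coe_iff, hM] at hle
  nlinarith [mul_pos hκ (sub_pos.2 hc'), mul_pos hκ (mul_pos hκ (sub_pos.2 hc'))]

end IsPSHOn

section ContPSH

variable {E : Type*} [NormedAddCommGroup E] [NormedSpace ℂ E] {Ω : Set E} {v : E → ℝ} {a b : E}

lemma continuousOn_comp_disc (hv : ContinuousOn v Ω) (hab : ∀ l : ℂ, ‖l‖ ≤ 1 → a + l • b ∈ Ω) :
    ContinuousOn (fun l : ℂ => v (a + l • b)) (sphere 0 1) :=
  hv.comp (by fun_prop) fun l hl => hab l (mem_sphere_zero_iff_norm.1 hl).le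

lemma circleIntegrable_comp_disc (hv : ContinuousOn v Ω)
    (hab : ∀ l : ℂ, ‖l‖ ≤ 1 → a + l • b ∈ Ω) :
    CircleIntegrable (fun l : ℂ => v (a + l • b)) 0 1 :=
  (continuousOn_comp_disc hv hab).circleIntegrable zero_le_one

/-- Continuous plurisubharmonic functions with real values. -/
structure IsContPSHOn (Ω : Set E) (v : E → ℝ) : Prop where
  continuousOn : ContinuousOn v Ω
  le_circleAverage : ∀ a b : E, (∀ l : ℂ, ‖l‖ ≤ 1 → a + l • b ∈ Ω) →
    v a ≤ circleAverage (fun l : ℂ => v (a + l • b)) 0 1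

lemma IsContPSHOn.isPSHOn {n : ℕ} {Ω : Set (EuclideanSpace ℂ (Fin n))}
    {v : EuclideanSpace ℂ (Fin n) → ℝ} (hv : IsContPSHOn Ω v) :
    IsPSHOn Ω fun z => (v z : EReal) := by
  refine ⟨(continuous_coe_real_ereal.comp_continuousOn hv.continuousOn).upperSemicontinuousOn,
    fun z _ => EReal.coe_ne_top _,
    fun z hz => ⟨z, mem_connectedComponentIn hz, EReal.coe_ne_bot _⟩,
    fun a b hab => le_iInf fun m => ?_⟩
  have hcont := continuousOn_comp_disc hv.continuousOn hab
  have hmean := (hv.le_circleAverage a b hab).trans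
    (circleAverage_mono (circleIntegrable_comp_disc hv.continuousOn hab)
      ((hcont.sup continuousOn_const).circleIntegrable zero_le_one)
      fun l _ => le_max_left (v (a + l • b)) (-(m : ℝ)))
  simp_rw [← EReal.coe_strictMono.monotone.map_max, EReal.toReal_coe]
  simpa only [EReal.coe_le_coe_iff, circleAverage_def, circleMap, Complex.ofReal_one, one_mul,
    zero_add, smul_eq_mul] using hmean

lemma isContPSHOn_const (C : ℝ) : IsContPSHOn Ω fun _ => C :=
  ⟨continuousOn_const, fun _ _ _ => (circleAverage_const C 0 1).ge⟩

lemma IsContPSHOn.add {w : E → ℝ} (hv : IsContPSHOn Ω v) (hw : IsContPSHOn Ω w) :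
    IsContPSHOn Ω fun z => v z + w z where
  continuousOn := hv.continuousOn.add hw.continuousOn
  le_circleAverage a b hab := by
    rw [circleAverage_fun_add (circleIntegrable_comp_disc hv.continuousOn hab)
      (circleIntegrable_comp_disc hw.continuousOn hab)]
    exact add_le_add (hv.le_circleAverage a b hab) (hw.le_circleAverage a b hab)

lemma IsContPSHOn.const_mul {q : ℝ} (hq : 0 ≤ q) (hv : IsContPSHOn Ω v) :
    IsContPSHOn Ω fun z => q * v z where
  continuousOn := continuousOn_const.mul hv.continuousOn
  le_circleAverage a b hab := by
    simp only [← smul_eq_mul q, circleAverage_fun_smul]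
    exact smul_le_smul_of_nonneg_left (hv.le_circleAverage a b hab) hq

lemma IsContPSHOn.of_forall_exists_le (hv : ContinuousOn v Ω)
    (h : ∀ a ∈ Ω, ∃ w, IsContPSHOn Ω w ∧ (∀ z ∈ Ω, w z ≤ v z) ∧ v a ≤ w a) :
    IsContPSHOn Ω v := by
  refine ⟨hv, fun a b hab => ?_⟩
  obtain ⟨w, hw, hle, ha⟩ := h a (by simpa using hab 0 (by simp))
  exact (ha.trans (hw.le_circleAverage a b hab)).trans (circleAverage_mono
    (circleIntegrable_comp_disc hw.continuousOn hab) (circleIntegrable_comp_disc hv hab)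
    fun l hl => hle _ (hab l (by simpa using (mem_sphere_zero_iff_norm.1 hl).le)))

variable [NormedSpace ℝ E]

lemma lineMap_add_smul [IsScalarTower ℝ ℂ E] (a b y : E) (t : ℝ) (l : ℂ) :
    AffineMap.lineMap (a + l • b) y t = AffineMap.lineMap a y t + l • (1 - t) • b := by
  simp only [AffineMap.lineMap_apply_module, smul_add, smul_comm l (1 - t) b]
  abel

/-- Smooth plurisubharmonic functions with real values. -/
structure IsSmoothPSHOn (Ω : Set E) (v : E → ℝ) : Prop extends IsContPSHOn Ω v where
  contDiffOn : ContDiffOn ℝ (⊤ : ℕ∞) v Ω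

lemma IsSmoothPSHOn.add_const (hv : IsSmoothPSHOn Ω v) (C : ℝ) :
    IsSmoothPSHOn Ω fun z => v z + C :=
  ⟨hv.toIsContPSHOn.add (isContPSHOn_const C), hv.contDiffOn.add contDiffOn_const⟩

lemma IsSmoothPSHOn.of_forall_isCompact [ProperSpace E] (hΩ : IsOpen Ω)
    (h : ∀ K ⊆ Ω, IsCompact K → ∃ f, IsSmoothPSHOn Ω f ∧ Set.EqOn v f K) :
    IsSmoothPSHOn Ω v := by
  have hcontDiff : ContDiffOn ℝ (⊤ : ℕ∞) v Ω := fun z hz => by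
    obtain ⟨K, hK, hzK, hKΩ⟩ := exists_compact_subset hΩ hz
    obtain ⟨f, hf, hvf⟩ := h K hKΩ hK
    exact ((hf.contDiffOn.contDiffAt (hΩ.mem_nhds hz)).congr_of_eventuallyEq
      (hvf.eventuallyEq_of_mem (mem_interior_iff_mem_nhds.1 hzK))).contDiffWithinAt
  refine ⟨⟨hcontDiff.continuousOn, fun a b hab => ?_⟩, hcontDiff⟩
  obtain ⟨f, hf, hvf⟩ := h ((fun l : ℂ => a + l • b) '' closedBall 0 1)
    (Set.image_subset_iff.2 fun l hl => hab l (mem_closedBall_zero_iff.1 hl))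
    ((isCompact_closedBall 0 1).image (by fun_prop))
  have hcircle : circleAverage (fun l : ℂ => v (a + l • b)) 0 1
      = circleAverage (fun l : ℂ => f (a + l • b)) 0 1 :=
    circleAverage_congr_sphere fun l hl =>
      hvf ⟨l, sphere_subset_closedBall (by simpa using hl), rfl⟩
  rw [hcircle, hvf ⟨0, by simp, by simp⟩]
  exact hf.le_circleAverage a b hab

end ContPSH

section StarDomain

variable {E : Type*} [NormedAddCommGroup E] [NormedSpace ℝ E]

/-- `Ω` is a nonempty open set that is star-shaped with respect to every point of the closed
ball of radius `R > 0` about `c`. -/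
structure IsStarDomain (Ω : Set E) (c : E) (R : ℝ) : Prop where
  radius_pos : 0 < R
  isOpen : IsOpen Ω
  nonempty : Ω.Nonempty
  starConvex : ∀ y ∈ closedBall c R, StarConvex ℝ y Ω

namespace IsStarDomain

variable {Ω : Set E} {c : E} {R : ℝ}

lemma lineMap_mem (hΩ : IsStarDomain Ω c R) {y z : E} {t : ℝ} (hz : z ∈ Ω)
    (hy : y ∈ closedBall c R) (ht : t ∈ Set.Icc 0 1) : AffineMap.lineMap z y t ∈ Ω := by
  rw [AffineMap.lineMap_apply_module, add_comm]
  exact hΩ.starConvex y hy hz ht.1 (sub_nonneg.2 ht.2) (by ring)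

lemma continuousOn_mul_comp_lineMap (hΩ : IsStarDomain Ω c R) {w v : E → ℝ} {t : ℝ}
    (hw : Continuous w) (hv : ContinuousOn v Ω) (ht : t ∈ Set.Icc 0 1) :
    ContinuousOn (fun p : E × E => w p.2 * v (AffineMap.lineMap p.1 p.2 t))
      (Ω ×ˢ closedBall c R) :=
  (hw.comp continuous_snd).continuousOn.mul
    (hv.comp (by fun_prop) fun _ hp => hΩ.lineMap_mem hp.1 hp.2 ht)

lemma starConvex_center (hΩ : IsStarDomain Ω c R) : StarConvex ℝ c Ω :=
  hΩ.starConvex c (mem_closedBall_self hΩ.radius_pos.le)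

lemma center_mem (hΩ : IsStarDomain Ω c R) : c ∈ Ω :=
  hΩ.starConvex_center.mem hΩ.nonempty

lemma isConnected (hΩ : IsStarDomain Ω c R) : IsConnected Ω :=
  (hΩ.starConvex_center.isPathConnected hΩ.center_mem).isConnected

lemma exists_preimage {F : Type*} [NormedAddCommGroup F] [NormedSpace ℝ F]
    (hΩ : IsStarDomain Ω c R) (A : F ≃ᴬ[ℝ] E) :
    ∃ r, IsStarDomain (A ⁻¹' Ω) (A.symm c) r := by
  have hball : A ⁻¹' ball c R ∈ 𝓝 (A.symm c) :=
    A.continuous.continuousAt.preimage_mem_nhds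
      (by simpa using ball_mem_nhds c hΩ.radius_pos)
  obtain ⟨r, hr, hrball⟩ := Metric.nhds_basis_closedBall.mem_iff.1 hball
  exact ⟨r, hr, hΩ.isOpen.preimage A.continuous, ⟨A.symm c, by simpa using hΩ.center_mem⟩,
    fun y hy => (hΩ.starConvex (A y) (ball_subset_closedBall (hrball hy))).affine_preimage
      (A : F →ᵃ[ℝ] E)⟩

end IsStarDomain

/-- The truncated open cone over `ball c R` with apex `z`: the points obtained from `z` by moving
a proportion `t < ε` of the way to a point of the ball. -/
def openCone (c : E) (R ε : ℝ) (z : E) : Set E :=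
  (fun s : ℝ × E => AffineMap.lineMap z s.2 s.1) '' Set.Ioo 0 ε ×ˢ ball c R

variable {c x z : E} {R ε : ℝ}

lemma mem_openCone_iff :
    x ∈ openCone c R ε z ↔ ∃ t ∈ Set.Ioo 0 ε, AffineMap.lineMap z x t⁻¹ ∈ ball c R := by
  constructor
  · rintro ⟨⟨t, y⟩, ⟨ht, hy⟩, rfl⟩
    refine ⟨t, ht, ?_⟩
    simpa [AffineMap.lineMap_apply, smul_smul, inv_mul_cancel₀ ht.1.ne'] using hy
  · rintro ⟨t, ht, hx⟩
    refine ⟨(t, AffineMap.lineMap z x t⁻¹), ⟨ht, hx⟩, ?_⟩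
    simp [AffineMap.lineMap_apply, smul_smul, mul_inv_cancel₀ ht.1.ne']

lemma isOpen_setOf_mem_openCone : IsOpen {p : E × E | p.2 ∈ openCone c R ε p.1} := by
  simp only [mem_openCone_iff, ← exists_prop, Set.ofPred_exists]
  exact isOpen_biUnion fun t _ => isOpen_ball.preimage
    (by fun_prop)

lemma isOpen_openCone : IsOpen (openCone c R ε z) :=
  isOpen_setOf_mem_openCone.preimage (.prodMk_right z)

lemma eventually_mem_openCone (hx : x ∈ openCone c R ε z) :
    ∀ᶠ w in 𝓝 z, x ∈ openCone c R ε w :=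
  (isOpen_setOf_mem_openCone.preimage (.prodMk_left x)).mem_nhds hx

lemma convex_openCone : Convex ℝ (openCone c R ε z) := by
  rintro _ ⟨⟨t, y⟩, ⟨ht, hy⟩, rfl⟩ _ ⟨⟨s, w⟩, ⟨hs, hw⟩, rfl⟩ p q hp hq hpq
  have hτ : p * t + q * s ∈ Set.Ioo 0 ε := convex_Ioo 0 ε ht hs hp hq hpq
  refine ⟨(p * t + q * s, (p * t / (p * t + q * s)) • y + (q * s / (p * t + q * s)) • w),
    ⟨hτ, convex_ball c R hy hw (div_nonneg (mul_nonneg hp ht.1.le) hτ.1.le)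
      (div_nonneg (mul_nonneg hq hs.1.le) hτ.1.le)
      (by rw [← add_div, div_self hτ.1.ne'])⟩, ?_⟩
  simp only [AffineMap.lineMap_apply_module, smul_add, smul_smul, mul_div_cancel₀ _ hτ.1.ne']
  obtain rfl : p = 1 - q := by linarith
  module

lemma lineMap_mem_closure_openCone (hR : 0 < R) (hε : 0 < ε) {s : ℝ × E}
    (hs : s ∈ Set.Icc 0 ε ×ˢ closedBall c R) :
    AffineMap.lineMap z s.2 s.1 ∈ closure (openCone c R ε z) := by
  rw [← closure_Ioo hε.ne, ← closure_ball c hR.ne', ← closure_prod_eq] at hs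
  refine image_closure_subset_closure_image (f := fun s : ℝ × E => AffineMap.lineMap z s.2 s.1)
    ?_ ⟨s, hs, rfl⟩
  fun_prop

end StarDomain

section ConeSup

variable {n : ℕ} {Ω : Set (EuclideanSpace ℂ (Fin n))} {c z : EuclideanSpace ℂ (Fin n)}
  {R ε : ℝ} {u : EuclideanSpace ℂ (Fin n) → EReal}

/-- The supremum of `u` over the truncated closed cone with apex `z` over `closedBall c R`; it
turns a plurisubharmonic function on a star domain into a continuous plurisubharmonic majorant. -/
def coneSup (c : EuclideanSpace ℂ (Fin n)) (R ε : ℝ) (u : EuclideanSpace ℂ (Fin n) → EReal)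
    (z : EuclideanSpace ℂ (Fin n)) : EReal :=
  ⨆ s ∈ Set.Icc 0 ε ×ˢ closedBall c R, u (AffineMap.lineMap z s.2 s.1)

lemma le_coneSup {s : ℝ × EuclideanSpace ℂ (Fin n)} (hs : s ∈ Set.Icc 0 ε ×ˢ closedBall c R) :
    u (AffineMap.lineMap z s.2 s.1) ≤ coneSup c R ε u z :=
  le_iSup₂ (f := fun s (_ : s ∈ Set.Icc 0 ε ×ˢ closedBall c R) =>
    u (AffineMap.lineMap z s.2 s.1)) s hs

lemma le_coneSup_of_mem_openCone {x : EuclideanSpace ℂ (Fin n)} (hx : x ∈ openCone c R ε z) :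
    u x ≤ coneSup c R ε u z := by
  obtain ⟨s, hs, rfl⟩ := hx
  exact le_coneSup (Set.prod_mono Set.Ioo_subset_Icc_self ball_subset_closedBall hs)

lemma coneSup_mono {ε' : ℝ} (h : ε ≤ ε') : coneSup c R ε u z ≤ coneSup c R ε' u z :=
  biSup_mono fun _ hs => Set.prod_mono (Set.Icc_subset_Icc_right h) subset_rfl hs

namespace IsStarDomain

lemma lineMap_mem_of_le_one (hΩ : IsStarDomain Ω c R) (hε : ε ≤ 1) (hz : z ∈ Ω)
    {s : ℝ × EuclideanSpace ℂ (Fin n)} (hs : s ∈ Set.Icc 0 ε ×ˢ closedBall c R) :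
    AffineMap.lineMap z s.2 s.1 ∈ Ω :=
  hΩ.lineMap_mem hz hs.2 ⟨hs.1.1, hs.1.2.trans hε⟩

lemma le_coneSup_self (hΩ : IsStarDomain Ω c R) (hε : 0 ≤ ε) : u z ≤ coneSup c R ε u z := by
  simpa using le_coneSup (u := u) (z := z) (s := (0, c))
    ⟨⟨le_rfl, hε⟩, mem_closedBall_self hΩ.radius_pos.le⟩

lemma coneSup_ne_top (hΩ : IsStarDomain Ω c R) (hu : IsPSHOn Ω u) (hε : ε ≤ 1) (hz : z ∈ Ω) :
    coneSup c R ε u z ≠ ⊤ := by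
  obtain ⟨M, hM⟩ := hu.exists_le_coe_of_isCompact
    ((isCompact_Icc.prod (isCompact_closedBall c R)).image
      (f := fun s : ℝ × EuclideanSpace ℂ (Fin n) => AffineMap.lineMap z s.2 s.1)
      (by fun_prop))
    (Set.image_subset_iff.2 fun s hs => hΩ.lineMap_mem_of_le_one hε hz hs)
  exact ((iSup₂_le fun s hs => hM _ ⟨s, hs, rfl⟩).trans_lt (EReal.coe_lt_top M)).ne

lemma coneSup_ne_bot (hΩ : IsStarDomain Ω c R) (hu : IsPSHOn Ω u) (hε : 0 < ε) (hε1 : ε ≤ 1)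
    (hz : z ∈ Ω) : coneSup c R ε u z ≠ ⊥ := by
  have hsub : openCone c R ε z ⊆ Ω := Set.image_subset_iff.2 fun s hs =>
    hΩ.lineMap_mem_of_le_one hε1 hz
      (Set.prod_mono Set.Ioo_subset_Icc_self ball_subset_closedBall hs)
  obtain ⟨w, hw, hbot⟩ := hu.exists_ne_bot hΩ.isOpen isOpen_openCone hsub
    (((Set.nonempty_Ioo.2 hε).prod (nonempty_ball.2 hΩ.radius_pos)).image _)
  exact fun h => hbot (le_bot_iff.1 (h ▸ le_coneSup_of_mem_openCone hw))

lemma coe_toReal_coneSup (hΩ : IsStarDomain Ω c R) (hu : IsPSHOn Ω u) (hε : 0 < ε)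
    (hε1 : ε ≤ 1) (hz : z ∈ Ω) : ((coneSup c R ε u z).toReal : EReal) = coneSup c R ε u z :=
  EReal.coe_toReal (hΩ.coneSup_ne_top hu hε1 hz) (hΩ.coneSup_ne_bot hu hε hε1 hz)

lemma eventually_lt_coneSup (hΩ : IsStarDomain Ω c R) (hu : IsPSHOn Ω u) (hε : 0 < ε)
    (hε1 : ε ≤ 1) (hz : z ∈ Ω) {b : EReal} (hb : b < coneSup c R ε u z) :
    ∀ᶠ w in 𝓝 z, b < coneSup c R ε u w := by
  obtain ⟨x, hx, hbx⟩ : ∃ x ∈ openCone c R ε z, b < u x := by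
    by_contra! hle
    refine hb.not_ge (iSup₂_le fun s hs => ?_)
    exact hu.le_on_closure_of_convex hΩ.isOpen isOpen_openCone convex_openCone hle
      (lineMap_mem_closure_openCone hΩ.radius_pos hε hs) (hΩ.lineMap_mem_of_le_one hε1 hz hs)
  exact (eventually_mem_openCone hx).mono fun w hw => hbx.trans_le (le_coneSup_of_mem_openCone hw)

lemma eventually_coneSup_le (hΩ : IsStarDomain Ω c R) (hu : IsPSHOn Ω u) (hε1 : ε ≤ 1)
    (hz : z ∈ Ω) {b : EReal} (hb : coneSup c R ε u z < b) :
    ∀ᶠ w in 𝓝 z, coneSup c R ε u w ≤ b := by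
  have hforall : ∀ᶠ w in 𝓝 z, ∀ s ∈ Set.Icc 0 ε ×ˢ closedBall c R,
      u (AffineMap.lineMap w s.2 s.1) < b := by
    refine (isCompact_Icc.prod (isCompact_closedBall c R)).eventually_forall_of_forall_eventually
      fun s hs => ?_
    have hcont : Continuous fun p : EuclideanSpace ℂ (Fin n) × ℝ × EuclideanSpace ℂ (Fin n) =>
        AffineMap.lineMap (k := ℝ) p.1 p.2.2 p.2.1 := by fun_prop
    exact (hcont.tendsto (z, s)).eventually ((hu.eventually_lt hΩ.isOpen
      (hΩ.lineMap_mem_of_le_one hε1 hz hs) ((le_coneSup hs).trans_lt hb)).mono fun _ h => h.1)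
  exact hforall.mono fun w hw => iSup₂_le fun s hs => (hw s hs).le

lemma continuousOn_toReal_coneSup (hΩ : IsStarDomain Ω c R) (hu : IsPSHOn Ω u) (hε : 0 < ε)
    (hε1 : ε ≤ 1) : ContinuousOn (fun z => (coneSup c R ε u z).toReal) Ω := by
  refine EReal.continuousOn_toReal.comp (s := Ω) (fun z hz => ContinuousAt.continuousWithinAt ?_)
    fun z hz => by simp [hΩ.coneSup_ne_top hu hε1 hz, hΩ.coneSup_ne_bot hu hε hε1 hz]
  refine tendsto_order.2 ⟨fun b hb => hΩ.eventually_lt_coneSup hu hε hε1 hz hb, fun b hb => ?_⟩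
  obtain ⟨b', hlt, hb'⟩ := exists_between hb
  exact (hΩ.eventually_coneSup_le hu hε1 hz hlt).mono fun w hw => hw.trans_lt hb'

lemma isContPSHOn_toReal_coneSup (hΩ : IsStarDomain Ω c R) (hu : IsPSHOn Ω u) (hε : 0 < ε)
    (hε1 : ε ≤ 1) : IsContPSHOn Ω fun z => (coneSup c R ε u z).toReal where
  continuousOn := hΩ.continuousOn_toReal_coneSup hu hε hε1
  le_circleAverage a b hab := by
    have ha : a ∈ Ω := by simpa using hab 0 (by simp)
    rw [← EReal.coe_le_coe_iff, hΩ.coe_toReal_coneSup hu hε hε1 ha]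
    refine iSup₂_le fun s hs => hu.le_circleAverage_of_le (b := (1 - s.1) • b) (fun l hl => ?_)
      (continuousOn_comp_disc (hΩ.continuousOn_toReal_coneSup hu hε hε1) hab) fun l hl => ?_
    · exact lineMap_add_smul a b s.2 s.1 l ▸ hΩ.lineMap_mem_of_le_one hε1 (hab l hl) hs
    · rw [← lineMap_add_smul, hΩ.coe_toReal_coneSup hu hε hε1 (hab l hl.le)]
      exact le_coneSup hs

lemma eventually_coneSup_lt (hΩ : IsStarDomain Ω c R) (hu : IsPSHOn Ω u) (hz : z ∈ Ω)
    {b : EReal} (hb : u z < b) : ∀ᶠ ε in 𝓝[>] (0 : ℝ), coneSup c R ε u z < b := by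
  obtain ⟨b', hlt, hb'⟩ := exists_between hb
  have hforall : ∀ᶠ t in 𝓝 (0 : ℝ), ∀ y ∈ closedBall c R, u (AffineMap.lineMap z y t) < b' := by
    refine (isCompact_closedBall c R).eventually_forall_of_forall_eventually fun y _ => ?_
    have hcont : Continuous fun p : ℝ × EuclideanSpace ℂ (Fin n) =>
        AffineMap.lineMap (k := ℝ) z p.2 p.1 := by fun_prop
    exact (hcont.tendsto' (0, y) z (by simp)).eventually
      ((hu.eventually_lt hΩ.isOpen hz hlt).mono fun _ h => h.1)
  obtain ⟨δ, hδ, hforall⟩ := Metric.eventually_nhds_iff.1 hforall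
  filter_upwards [Ioo_mem_nhdsGT hδ] with ε hε
  refine (iSup₂_le fun s hs => ?_).trans_lt hb'
  refine (hforall ?_ s.2 hs.2).le
  rw [Real.dist_0_eq_abs, abs_of_nonneg hs.1.1]
  exact hs.1.2.trans_lt hε.2

lemma tendsto_coneSup (hΩ : IsStarDomain Ω c R) (hu : IsPSHOn Ω u) (hz : z ∈ Ω) :
    Tendsto (fun ε => coneSup c R ε u z) (𝓝[>] 0) (𝓝 (u z)) :=
  tendsto_order.2 ⟨fun _ hb => eventually_mem_nhdsWithin.mono fun _ hε =>
    hb.trans_le (hΩ.le_coneSup_self hε.le), fun _ hb => hΩ.eventually_coneSup_lt hu hz hb⟩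

end IsStarDomain

end ConeSup

section CircleAverage

variable {X : Type*} [TopologicalSpace X] [T2Space X] [SecondCountableTopology X]
  [MeasurableSpace X] [BorelSpace X] {μ : Measure X} [SFinite μ] [IsFiniteMeasureOnCompacts μ]
  {K : Set X} {f : ℂ → X → ℝ}

lemma integrable_comp_circleMap (hK : IsCompact K)
    (hf : ContinuousOn (Function.uncurry f) (sphere 0 1 ×ˢ K)) :
    Integrable (Function.uncurry fun θ y => f (circleMap 0 1 θ) y)
      ((volume.restrict (Set.uIoc 0 (2 * π))).prod (μ.restrict K)) := by
  have hcont : ContinuousOn (fun p : ℝ × X => f (circleMap 0 1 p.1) p.2)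
      (Set.uIcc 0 (2 * π) ×ˢ K) :=
    hf.comp (f := fun p : ℝ × X => (circleMap 0 1 p.1, p.2)) (by fun_prop)
      fun p hp => ⟨circleMap_mem_sphere 0 zero_le_one p.1, hp.2⟩
  rw [Measure.prod_restrict]
  exact (hcont.integrableOn_compact (isCompact_uIcc.prod hK)).mono_set
    (Set.prod_mono Set.uIoc_subset_uIcc subset_rfl)

lemma integrableOn_circleAverage (hK : IsCompact K)
    (hf : ContinuousOn (Function.uncurry f) (sphere 0 1 ×ˢ K)) :
    IntegrableOn (fun y => circleAverage (f · y) 0 1) K μ := by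
  have h := (integrable_comp_circleMap (μ := μ) hK hf).integral_prod_right.const_mul (2 * π)⁻¹
  simpa only [circleAverage_def, IntegrableOn, smul_eq_mul, Function.uncurry_apply_pair,
    intervalIntegral.integral_of_le two_pi_pos.le, Set.uIoc_of_le two_pi_pos.le] using h

lemma circleAverage_setIntegral (hK : IsCompact K)
    (hf : ContinuousOn (Function.uncurry f) (sphere 0 1 ×ˢ K)) :
    circleAverage (fun l => ∫ y in K, f l y ∂μ) 0 1
      = ∫ y in K, circleAverage (f · y) 0 1 ∂μ := by
  simp only [circleAverage_def, integral_smul]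
  rw [intervalIntegral_integral_swap (integrable_comp_circleMap hK hf)]

end CircleAverage

section Smoothing

variable {E : Type*} [NormedAddCommGroup E] [NormedSpace ℝ E] [FiniteDimensional ℝ E]
  [MeasurableSpace E] [BorelSpace E] {μ : Measure E} {Ω : Set E} {c : E} {v : E → ℝ} {t : ℝ}

lemma contDiff_integral_mul_comp_lineMap [μ.IsAddHaarMeasure] {ρ k : E → ℝ} {m : ℕ∞}
    (hρ : ContDiff ℝ m ρ) (hρ_supp : HasCompactSupport ρ) (hk : Integrable k μ) (ht : t ≠ 0) :
    ContDiff ℝ m fun z => ∫ y, ρ y * k (AffineMap.lineMap z y t) ∂μ := by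
  have hconv : ContDiff ℝ m (convolution (fun y => ρ (-y)) (fun y => k (t • y))
      (ContinuousLinearMap.lsmul ℝ ℝ) μ) :=
    HasCompactSupport.contDiff_convolution_left _ (hρ_supp.comp_homeomorph (Homeomorph.neg E))
      (hρ.comp contDiff_neg) (hk.comp_smul ht).locallyIntegrable
  convert hconv.comp (contDiff_const_smul ((1 - t) / t)) using 2 with z
  rw [Function.comp_apply, convolution_def, ← integral_neg_eq_self]
  refine integral_congr_ae (Eventually.of_forall fun y => ?_)
  simp only [ContinuousLinearMap.lsmul_apply, smul_eq_mul, AffineMap.lineMap_apply_module,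
    smul_sub, smul_smul, mul_div_cancel₀ _ ht, smul_neg, ← sub_eq_add_neg]

/-- The average of `v` over the image of the support of the bump function `χ`, contracted towards
`z` by the factor `t`, with weight proportional to `χ`. -/
def shrinkAverage (μ : Measure E) (χ : ContDiffBump c) (v : E → ℝ) (t : ℝ) (z : E) : ℝ :=
  ∫ y in closedBall c χ.rOut, χ.normed μ y * v (AffineMap.lineMap z y t) ∂μ

variable {χ : ContDiffBump c} [μ.IsAddHaarMeasure]

lemma normed_eq_zero_of_notMem_closedBall {y : E} (hy : y ∉ closedBall c χ.rOut) :
    χ.normed μ y = 0 :=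
  Function.notMem_support.1 fun h => hy (ball_subset_closedBall (χ.support_normed_eq (μ := μ) ▸ h))

lemma setIntegral_normed_closedBall : ∫ y in closedBall c χ.rOut, χ.normed μ y ∂μ = 1 := by
  rw [setIntegral_eq_integral_of_forall_compl_eq_zero fun y hy =>
    normed_eq_zero_of_notMem_closedBall hy, χ.integral_normed]

namespace IsStarDomain

variable (hΩ : IsStarDomain Ω c χ.rOut) (hv : ContinuousOn v Ω)
include hΩ hv

lemma integrableOn_shrinkAverage_integrand (ht : t ∈ Set.Icc 0 1) {z : E} (hz : z ∈ Ω) :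
    IntegrableOn (fun y => χ.normed μ y * v (AffineMap.lineMap z y t)) (closedBall c χ.rOut) μ :=
  ((hΩ.continuousOn_mul_comp_lineMap χ.continuous_normed hv ht).comp (by fun_prop : Continuous
    fun y : E => (z, y)).continuousOn fun _ hy => ⟨hz, hy⟩).integrableOn_compact
    (isCompact_closedBall c _)

lemma contDiffOn_shrinkAverage (ht : t ∈ Set.Ioc 0 1) :
    ContDiffOn ℝ (⊤ : ℕ∞) (shrinkAverage μ χ v t) Ω := fun z₀ hz₀ => by
  obtain ⟨r, hr, hrΩ⟩ := Metric.nhds_basis_closedBall.mem_iff.1 (hΩ.isOpen.mem_nhds hz₀)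
  set K : Set E := (fun p : E × E => AffineMap.lineMap p.1 p.2 t) ''
    closedBall z₀ r ×ˢ closedBall c χ.rOut
  have hK : IsCompact K :=
    ((isCompact_closedBall z₀ r).prod (isCompact_closedBall c _)).image (by fun_prop)
  have hKΩ : K ⊆ Ω := Set.image_subset_iff.2 fun p hp =>
    hΩ.lineMap_mem (hrΩ hp.1) hp.2 ⟨ht.1.le, ht.2⟩
  have hk : Integrable (K.indicator v) μ :=
    (integrable_indicator_iff hK.measurableSet).2 ((hv.mono hKΩ).integrableOn_compact hK)
  have hsmooth := contDiff_integral_mul_comp_lineMap (m := ⊤) (χ.contDiff_normed (μ := μ))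
    χ.hasCompactSupport_normed hk ht.1.ne'
  refine (hsmooth.contDiffAt.congr_of_eventuallyEq ?_).contDiffWithinAt
  filter_upwards [closedBall_mem_nhds z₀ hr] with z hz
  rw [← setIntegral_eq_integral_of_forall_compl_eq_zero (s := closedBall c χ.rOut) fun y hy => by
    rw [normed_eq_zero_of_notMem_closedBall hy, zero_mul]]
  refine setIntegral_congr_fun measurableSet_closedBall fun y hy => ?_
  have hmem : AffineMap.lineMap z y t ∈ K := ⟨(z, y), ⟨hz, hy⟩, rfl⟩
  rw [Set.indicator_of_mem hmem]

lemma abs_shrinkAverage_sub_le (ht : t ∈ Set.Icc 0 1) {z : E} (hz : z ∈ Ω) {η : ℝ}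
    (h : ∀ y ∈ closedBall c χ.rOut, |v (AffineMap.lineMap z y t) - v z| ≤ η) :
    |shrinkAverage μ χ v t z - v z| ≤ η := by
  have hχ : IntegrableOn (χ.normed μ) (closedBall c χ.rOut) μ := χ.integrable_normed.integrableOn
  have hsub : shrinkAverage μ χ v t z - v z
      = ∫ y in closedBall c χ.rOut, χ.normed μ y * (v (AffineMap.lineMap z y t) - v z) ∂μ := by
    simp_rw [mul_sub]
    rw [integral_sub (hΩ.integrableOn_shrinkAverage_integrand hv ht hz) (hχ.mul_const _),
      integral_mul_const, setIntegral_normed_closedBall, one_mul, shrinkAverage]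
  have hη : η = ∫ y in closedBall c χ.rOut, χ.normed μ y * η ∂μ := by
    rw [integral_mul_const, setIntegral_normed_closedBall, one_mul]
  rw [hsub, ← Real.norm_eq_abs, hη]
  refine norm_integral_le_of_norm_le (hχ.mul_const _)
    ((ae_restrict_iff' measurableSet_closedBall).2 (Eventually.of_forall fun y hy => ?_))
  rw [norm_mul, Real.norm_of_nonneg (χ.nonneg_normed y)]
  exact mul_le_mul_of_nonneg_left (h y hy) (χ.nonneg_normed y)

lemma eventually_abs_shrinkAverage_sub_le {K : Set E} (hK : IsCompact K) (hKΩ : K ⊆ Ω) {η : ℝ}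
    (hη : 0 < η) : ∀ᶠ t in 𝓝[>] (0 : ℝ), ∀ z ∈ K, |shrinkAverage μ χ v t z - v z| ≤ η := by
  have hclose : ∀ᶠ t in 𝓝 (0 : ℝ), ∀ p ∈ K ×ˢ closedBall c χ.rOut,
      |v (AffineMap.lineMap p.1 p.2 t) - v p.1| < η := by
    refine (hK.prod (isCompact_closedBall c _)).eventually_forall_of_forall_eventually
      fun p hp => ?_
    have hvp : ContinuousAt v p.1 := hv.continuousAt (hΩ.isOpen.mem_nhds (hKΩ hp.1))
    have hline : Tendsto (fun q : ℝ × E × E => AffineMap.lineMap (k := ℝ) q.2.1 q.2.2 q.1)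
        (𝓝 (0, p)) (𝓝 p.1) := by
      refine Continuous.tendsto' ?_ _ _ (by simp)
      fun_prop
    have hdiff := (hvp.tendsto.comp hline).sub
      (hvp.tendsto.comp (continuous_fst.comp continuous_snd).continuousAt)
    simpa using hdiff.abs.eventually_lt_const (by simpa using hη)
  filter_upwards [hclose.filter_mono nhdsWithin_le_nhds, Ioc_mem_nhdsGT one_pos] with t hclose ht
    z hz
  exact hΩ.abs_shrinkAverage_sub_le hv ⟨ht.1.le, ht.2⟩ (hKΩ hz) fun y hy =>
    (hclose (z, y) ⟨hz, hy⟩).le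

end IsStarDomain

variable [NormedSpace ℂ E] [IsScalarTower ℝ ℂ E]

lemma IsStarDomain.isSmoothPSHOn_shrinkAverage (hΩ : IsStarDomain Ω c χ.rOut)
    (hv : IsContPSHOn Ω v) (ht : t ∈ Set.Ioc 0 1) :
    IsSmoothPSHOn Ω (shrinkAverage μ χ v t) := by
  have ht' : t ∈ Set.Icc (0 : ℝ) 1 := ⟨ht.1.le, ht.2⟩
  have hsmooth := hΩ.contDiffOn_shrinkAverage (μ := μ) hv.continuousOn ht
  refine ⟨⟨hsmooth.continuousOn, fun a b hab => ?_⟩, hsmooth⟩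
  have ha : a ∈ Ω := by simpa using hab 0 (by simp)
  have hcont : ContinuousOn (Function.uncurry fun (l : ℂ) y =>
      χ.normed μ y * v (AffineMap.lineMap (a + l • b) y t)) (sphere 0 1 ×ˢ closedBall c χ.rOut) :=
    (hΩ.continuousOn_mul_comp_lineMap χ.continuous_normed hv.continuousOn ht').comp
      (f := fun p : ℂ × E => (a + p.1 • b, p.2)) (by fun_prop)
      fun p hp => ⟨hab p.1 (mem_sphere_zero_iff_norm.1 hp.1).le, hp.2⟩
  have hK := isCompact_closedBall c χ.rOut
  simp only [shrinkAverage]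
  rw [circleAverage_setIntegral hK hcont]
  refine setIntegral_mono_on (hΩ.integrableOn_shrinkAverage_integrand hv.continuousOn ht' ha)
    (integrableOn_circleAverage hK hcont) measurableSet_closedBall fun y hy => ?_
  simp only [lineMap_add_smul, ← smul_eq_mul (χ.normed μ y), circleAverage_fun_smul]
  refine smul_le_smul_of_nonneg_left ?_ (χ.nonneg_normed y)
  exact hv.le_circleAverage _ _ fun l hl => lineMap_add_smul a b y t l ▸
    hΩ.lineMap_mem (hab l hl) hy ht'

end Smoothing

theorem IsStarDomain.exists_isSmoothPSHOn_abs_sub_le {E : Type*} [NormedAddCommGroup E]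
    [NormedSpace ℝ E] [FiniteDimensional ℝ E] [NormedSpace ℂ E] [IsScalarTower ℝ ℂ E]
    {Ω K : Set E} {c : E} {R : ℝ} {v : E → ℝ} (hΩ : IsStarDomain Ω c R) (hv : IsContPSHOn Ω v)
    (hK : IsCompact K) (hKΩ : K ⊆ Ω) {η : ℝ} (hη : 0 < η) :
    ∃ T : E → ℝ, IsSmoothPSHOn Ω T ∧ ∀ z ∈ K, |T z - v z| ≤ η := by
  borelize E
  obtain ⟨χ, rfl⟩ : ∃ χ : ContDiffBump c, χ.rOut = R :=
    ⟨⟨R / 2, R, half_pos hΩ.radius_pos, half_lt_self hΩ.radius_pos⟩, rfl⟩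
  obtain ⟨t, hclose, ht⟩ := ((hΩ.eventually_abs_shrinkAverage_sub_le (μ := Measure.addHaar)
    hv.continuousOn hK hKΩ hη).and (Ioc_mem_nhdsGT one_pos)).exists
  exact ⟨shrinkAverage Measure.addHaar χ v t, hΩ.isSmoothPSHOn_shrinkAverage hv ht, hclose⟩

section RegMax

/-- A smooth nondecreasing convex function that vanishes on `(-∞, 0]` and has slope `1` on
`[1, ∞)`. -/
def convexRamp (x : ℝ) : ℝ := ∫ y in (0 : ℝ)..x, smoothTransition y

lemma intervalIntegrable_smoothTransition (x y : ℝ) :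
    IntervalIntegrable smoothTransition volume x y :=
  smoothTransition.continuous.intervalIntegrable x y

lemma contDiff_convexRamp : ContDiff ℝ (⊤ : ℕ∞) convexRamp := by
  have hderiv (x : ℝ) : HasDerivAt convexRamp (smoothTransition x) x :=
    smoothTransition.continuous.integral_hasStrictDerivAt 0 x |>.hasDerivAt
  rw [contDiff_infty_iff_deriv, deriv_eq hderiv]
  exact ⟨fun x => (hderiv x).differentiableAt, smoothTransition.contDiff⟩

lemma convexRamp_add_mul_le (x y : ℝ) :
    convexRamp x + smoothTransition x * (y - x) ≤ convexRamp y := by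
  have hsub : convexRamp y - convexRamp x = ∫ t in x..y, smoothTransition t :=
    intervalIntegral.integral_interval_sub_left (intervalIntegrable_smoothTransition 0 y)
      (intervalIntegrable_smoothTransition 0 x)
  suffices smoothTransition x * (y - x) ≤ ∫ t in x..y, smoothTransition t by linarith
  rw [mul_comm, ← smul_eq_mul, ← intervalIntegral.integral_const]
  rcases le_total x y with hxy | hyx
  · exact intervalIntegral.integral_mono_on hxy intervalIntegrable_const
      (intervalIntegrable_smoothTransition x y) fun t ht => smoothTransition.monotone ht.1
  · rw [intervalIntegral.integral_symm y x, intervalIntegral.integral_symm y x, neg_le_neg_iff]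
    exact intervalIntegral.integral_mono_on hyx (intervalIntegrable_smoothTransition y x)
      intervalIntegrable_const fun t ht => smoothTransition.monotone ht.2

lemma convexRamp_zero : convexRamp 0 = 0 := intervalIntegral.integral_same

lemma convexRamp_of_nonpos {x : ℝ} (hx : x ≤ 0) : convexRamp x = 0 := by
  have hle := convexRamp_add_mul_le x 0
  have hge := convexRamp_add_mul_le 0 x
  rw [smoothTransition.zero_of_nonpos hx, convexRamp_zero] at hle
  rw [smoothTransition.zero, convexRamp_zero] at hge
  linarith

lemma sub_one_le_convexRamp (x : ℝ) : x - 1 ≤ convexRamp x := by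
  have h₀ := convexRamp_add_mul_le 0 1
  have h₁ := convexRamp_add_mul_le 1 x
  rw [smoothTransition.zero, convexRamp_zero] at h₀
  rw [smoothTransition.one] at h₁
  linarith

/-- A regularised maximum of `a` and `b`: smooth, convex and nondecreasing in `(a, b)`, at least
`max a b`, and equal to `a` as soon as `b ≤ a - δ`. -/
def regMax (δ a b : ℝ) : ℝ := a + δ * convexRamp ((b - a) / δ + 1)

variable {δ : ℝ}

lemma regMax_of_le_sub (hδ : 0 < δ) {a b : ℝ} (h : b ≤ a - δ) : regMax δ a b = a := by
  have harg : (b - a) / δ ≤ -1 := by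
    rw [div_le_iff₀ hδ]
    linarith
  rw [regMax, convexRamp_of_nonpos (by linarith), mul_zero, add_zero]

lemma le_regMax_right (hδ : 0 < δ) (a b : ℝ) : b ≤ regMax δ a b :=
  calc b = a + δ * ((b - a) / δ + 1 - 1) := by field_simp; ring
    _ ≤ regMax δ a b := by
      unfold regMax
      gcongr
      exact sub_one_le_convexRamp _

lemma exists_regMax_add_le (hδ : 0 < δ) (a₀ b₀ : ℝ) : ∃ q ∈ Set.Icc (0 : ℝ) 1, ∀ a b,
    regMax δ a₀ b₀ + ((1 - q) * (a - a₀) + q * (b - b₀)) ≤ regMax δ a b := by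
  refine ⟨smoothTransition ((b₀ - a₀) / δ + 1), ⟨smoothTransition.nonneg _,
    smoothTransition.le_one _⟩, fun a b => ?_⟩
  have htangent := mul_le_mul_of_nonneg_left
    (convexRamp_add_mul_le ((b₀ - a₀) / δ + 1) ((b - a) / δ + 1)) hδ.le
  set q := smoothTransition ((b₀ - a₀) / δ + 1)
  have hslope : δ * (q * ((b - a) / δ + 1 - ((b₀ - a₀) / δ + 1)))
      = q * ((b - a) - (b₀ - a₀)) := by
    field_simp
    ring
  rw [mul_add, hslope] at htangent
  unfold regMax
  linarith

variable {E : Type*} [NormedAddCommGroup E] [NormedSpace ℂ E] {Ω : Set E} {f g : E → ℝ}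

lemma isContPSHOn_regMax (hδ : 0 < δ) (hf : IsContPSHOn Ω f) (hg : IsContPSHOn Ω g) :
    IsContPSHOn Ω fun z => regMax δ (f z) (g z) := by
  refine .of_forall_exists_le (hf.continuousOn.add (continuousOn_const.mul
    (contDiff_convexRamp.continuous.comp_continuousOn
      (((hg.continuousOn.sub hf.continuousOn).div_const δ).add continuousOn_const)))) fun a _ => ?_
  obtain ⟨q, ⟨hq₀, hq₁⟩, htangent⟩ := exists_regMax_add_le hδ (f a) (g a)
  refine ⟨_, ((hf.const_mul (sub_nonneg.2 hq₁)).add (hg.const_mul hq₀)).add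
    (isContPSHOn_const (regMax δ (f a) (g a) - ((1 - q) * f a + q * g a))),
    fun z _ => ?_, by linarith⟩
  linarith [htangent (f z) (g z)]

variable [NormedSpace ℝ E]

lemma isSmoothPSHOn_regMax (hδ : 0 < δ) (hf : IsSmoothPSHOn Ω f) (hg : IsSmoothPSHOn Ω g) :
    IsSmoothPSHOn Ω fun z => regMax δ (f z) (g z) where
  toIsContPSHOn := isContPSHOn_regMax hδ hf.toIsContPSHOn hg.toIsContPSHOn
  contDiffOn := hf.contDiffOn.add (contDiffOn_const.mul (contDiff_convexRamp.comp_contDiffOn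
    (((hg.contDiffOn.sub hf.contDiffOn).div_const δ).add contDiffOn_const)))

end RegMax

section Gluing

lemma exists_monotone_exhaustion {X : Type*} [TopologicalSpace X] [LocallyCompactSpace X]
    [SecondCountableTopology X] {Ω : Set X} (hΩ : IsOpen Ω) :
    ∃ K : ℕ → Set X, Monotone K ∧ (∀ i, IsCompact (K i)) ∧ (∀ i, K i ⊆ Ω) ∧
      ∀ C ⊆ Ω, IsCompact C → ∃ i, C ⊆ K i := by
  have : LocallyCompactSpace Ω := hΩ.locallyCompactSpace
  let K := CompactExhaustion.choice Ω
  refine ⟨fun i => Subtype.val '' K i, fun i j h => Set.image_mono (K.subset h),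
    fun i => (K.isCompact i).image continuous_subtype_val, fun i => Subtype.coe_image_subset Ω _,
    fun C hCΩ hC => ?_⟩
  have hC' : IsCompact (Subtype.val ⁻¹' C : Set Ω) :=
    Topology.IsInducing.subtypeVal.isCompact_preimage' hC (by simpa using hCΩ)
  obtain ⟨i, hi⟩ := K.exists_superset_of_isCompact hC'
  exact ⟨i, fun x hx => ⟨⟨x, hCΩ hx⟩, hi hx, rfl⟩⟩

variable {E : Type*} {K : ℕ → Set E} {δ : ℕ → ℝ} {T : ℕ → E → ℝ} {z : E}

/-- The regularised maximum of `T m, T (m + 1), …, T (m + k)`, nested from the right. -/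
def iterRegMax (δ : ℕ → ℝ) (T : ℕ → E → ℝ) : ℕ → ℕ → E → ℝ
  | 0, m => T m
  | k + 1, m => fun z => regMax (δ m) (T m z) (iterRegMax δ T k (m + 1) z)

/-- The eventual value of `iterRegMax δ T k m z` as `k → ∞`. -/
def gluedMax (δ : ℕ → ℝ) (T : ℕ → E → ℝ) (m : ℕ) (z : E) : ℝ :=
  limUnder atTop fun k => iterRegMax δ T k m z

lemma iterRegMax_succ_of_mem (hδ : ∀ m, 0 < δ m)
    (hT : ∀ m, ∀ z ∈ K m, T (m + 1) z ≤ T m z - δ m) (k m : ℕ) (hz : z ∈ K (m + k)) :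
    iterRegMax δ T (k + 1) m z = iterRegMax δ T k m z := by
  induction k generalizing m with
  | zero => exact regMax_of_le_sub (hδ m) (hT m z hz)
  | succ k ih => exact congrArg (regMax (δ m) (T m z)) (ih (m + 1) (by rwa [add_right_comm]))

lemma gluedMax_eq_iterRegMax (hK : Monotone K) (hδ : ∀ m, 0 < δ m)
    (hT : ∀ m, ∀ z ∈ K m, T (m + 1) z ≤ T m z - δ m) {k m : ℕ} (hz : z ∈ K (m + k)) :
    gluedMax δ T m z = iterRegMax δ T k m z := by
  have hconst : ∀ j ≥ k, iterRegMax δ T j m z = iterRegMax δ T k m z := fun j hj => by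
    induction j, hj using Nat.le_induction with
    | base => rfl
    | succ j hj ih => rw [iterRegMax_succ_of_mem hδ hT j m (hK (by lia) hz), ih]
  exact (tendsto_atTop_of_eventually_const hconst).limUnder_eq

lemma gluedMax_succ_le (hK : Monotone K) (hδ : ∀ m, 0 < δ m)
    (hT : ∀ m, ∀ z ∈ K m, T (m + 1) z ≤ T m z - δ m) {k : ℕ} (hz : z ∈ K k) (m : ℕ) :
    gluedMax δ T (m + 1) z ≤ gluedMax δ T m z := by
  rw [gluedMax_eq_iterRegMax hK hδ hT (hK (show k ≤ m + 1 + k by lia) hz),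
    gluedMax_eq_iterRegMax hK hδ hT (hK (show k ≤ m + (k + 1) by lia) hz)]
  exact le_regMax_right (hδ m) _ _

variable [NormedAddCommGroup E] [NormedSpace ℂ E] [NormedSpace ℝ E] {Ω : Set E}

lemma isSmoothPSHOn_iterRegMax (hδ : ∀ m, 0 < δ m) (hT : ∀ m, IsSmoothPSHOn Ω (T m)) (k m : ℕ) :
    IsSmoothPSHOn Ω (iterRegMax δ T k m) := by
  induction k generalizing m with
  | zero => exact hT m
  | succ k ih => exact isSmoothPSHOn_regMax (hδ m) (hT m) (ih (m + 1))

lemma isSmoothPSHOn_gluedMax [ProperSpace E] (hΩ : IsOpen Ω) (hK : Monotone K)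
    (hexhaust : ∀ C ⊆ Ω, IsCompact C → ∃ i, C ⊆ K i) (hδ : ∀ m, 0 < δ m)
    (hT : ∀ m, ∀ z ∈ K m, T (m + 1) z ≤ T m z - δ m) (hT_psh : ∀ m, IsSmoothPSHOn Ω (T m))
    (m : ℕ) : IsSmoothPSHOn Ω (gluedMax δ T m) :=
  .of_forall_isCompact hΩ fun C hCΩ hC => by
    obtain ⟨i, hi⟩ := hexhaust C hCΩ hC
    exact ⟨_, isSmoothPSHOn_iterRegMax hδ hT_psh i m, fun z hz =>
      gluedMax_eq_iterRegMax hK hδ hT (hK (Nat.le_add_left i m) (hi hz))⟩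

theorem exists_antitone_isSmoothPSHOn [ProperSpace E] (hΩ : IsOpen Ω) {V : ℕ → E → ℝ}
    (hV : ∀ z ∈ Ω, Antitone fun k => V k z)
    (happrox : ∀ k, ∀ K ⊆ Ω, IsCompact K → ∀ η > 0,
      ∃ T, IsSmoothPSHOn Ω T ∧ ∀ z ∈ K, |T z - V k z| ≤ η) :
    ∃ v : ℕ → E → ℝ, (∀ k, IsSmoothPSHOn Ω (v k)) ∧ (∀ z ∈ Ω, Antitone fun k => v k z) ∧
      ∀ z ∈ Ω, Tendsto (fun k => v k z - V k z) atTop (𝓝 0) := by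
  obtain ⟨K, hKmono, hK, hKΩ, hexhaust⟩ := exists_monotone_exhaustion hΩ
  set e : ℕ → ℝ := fun m => (1 / 2) ^ m
  have he (m : ℕ) : 0 < e m := by positivity
  have he_succ (m : ℕ) : e (m + 1) = e m / 2 := by simp only [e, pow_succ]; ring
  choose T hT hTV using fun m => happrox m (K m) (hKΩ m) (hK m) (e m / 2) (half_pos (he m))
  -- Raising `T m` by `(5 / 2) * e m` makes the sequence drop by at least `e m / 2` on `K m`.
  set S : ℕ → E → ℝ := fun m z => T m z + 5 / 2 * e m
  have hδ (m : ℕ) : 0 < e m / 2 := half_pos (he m)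
  have hdrop : ∀ m, ∀ z ∈ K m, S (m + 1) z ≤ S m z - e m / 2 := fun m z hz => by
    have h₀ := abs_le.1 (hTV m z hz)
    have h₁ := abs_le.1 (hTV (m + 1) z (hKmono m.le_succ hz))
    have hVm : V (m + 1) z ≤ V m z := hV z (hKΩ m hz) m.le_succ
    simp only [S, he_succ] at h₁ ⊢
    linarith
  have hmem : ∀ z ∈ Ω, ∃ i, z ∈ K i := fun z hz => by
    simpa using hexhaust {z} (by simpa using hz) isCompact_singleton
  refine ⟨gluedMax (fun m => e m / 2) S,
    isSmoothPSHOn_gluedMax hΩ hKmono hexhaust hδ hdrop fun m => (hT m).add_const _,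
    fun z hz => ?_, fun z hz => ?_⟩
  · obtain ⟨i, hi⟩ := hmem z hz
    exact antitone_nat_of_succ_le (gluedMax_succ_le hKmono hδ hdrop hi)
  · obtain ⟨i, hi⟩ := hmem z hz
    have he_tendsto : Tendsto (fun m => 3 * e m) atTop (𝓝 0) := by
      simpa only [mul_zero] using (tendsto_pow_atTop_nhds_zero_of_lt_one
        (by norm_num : (0 : ℝ) ≤ 1 / 2) (by norm_num)).const_mul 3
    refine squeeze_zero_norm' ?_ he_tendsto
    filter_upwards [eventually_ge_atTop i] with m hm
    have hz : z ∈ K m := hKmono hm hi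
    rw [gluedMax_eq_iterRegMax hKmono hδ hdrop (k := 0) hz, Real.norm_eq_abs, abs_le]
    have h := abs_le.1 (hTV m z hz)
    constructor <;> simp only [iterRegMax, S] <;> linarith [he m]

end Gluing

theorem IsStarDomain.isSDomain {n : ℕ} {Ω : Set (EuclideanSpace ℂ (Fin n))}
    {c : EuclideanSpace ℂ (Fin n)} {R : ℝ} (hΩ : IsStarDomain Ω c R) : IsSDomain Ω := by
  refine ⟨hΩ.isOpen, hΩ.isConnected, fun u hu => ?_⟩
  set ε : ℕ → ℝ := fun k => 1 / ((k : ℝ) + 1)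
  have hε (k : ℕ) : 0 < ε k := Nat.one_div_pos_of_nat
  have hε_anti : Antitone ε := fun _ _ h => Nat.one_div_le_one_div h
  have hε1 (k : ℕ) : ε k ≤ 1 := by simpa [ε] using hε_anti k.zero_le
  have hV {z : EuclideanSpace ℂ (Fin n)} (hz : z ∈ Ω) (k : ℕ) :=
    hΩ.coe_toReal_coneSup hu (hε k) (hε1 k) hz
  obtain ⟨v, hv, hanti, hlim⟩ := exists_antitone_isSmoothPSHOn hΩ.isOpen
    (V := fun k z => (coneSup c R (ε k) u z).toReal)
    (fun z hz k l hkl => EReal.coe_le_coe_iff.1 <| by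
      simpa only [hV hz] using coneSup_mono (hε_anti hkl))
    fun k K hKΩ hK η hη => hΩ.exists_isSmoothPSHOn_abs_sub_le
      (hΩ.isContPSHOn_toReal_coneSup hu (hε k) (hε1 k)) hK hKΩ hη
  refine ⟨v, fun k => (hv k).contDiffOn, fun k => (hv k).isPSHOn,
    fun k z hz => hanti z hz k.le_succ, fun z hz => ?_⟩
  have hε_tendsto : Tendsto ε atTop (𝓝[>] 0) :=
    tendsto_nhdsWithin_iff.2 ⟨tendsto_one_div_add_atTop_nhds_zero_nat, .of_forall hε⟩
  have hsum : Tendsto (fun k => coneSup c R (ε k) u z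
      + ((v k z - (coneSup c R (ε k) u z).toReal : ℝ) : EReal)) atTop (𝓝 (u z + (0 : ℝ))) :=
    (EReal.continuousAt_add (by simp) (by simp)).tendsto.comp
      (((hΩ.tendsto_coneSup hu hz).comp hε_tendsto).prodMk_nhds
        (EReal.tendsto_coe.2 (hlim z hz)))
  rw [EReal.coe_zero, add_zero] at hsum
  refine hsum.congr fun k => ?_
  rw [← hV hz, ← EReal.coe_add, EReal.toReal_coe, add_sub_cancel]

section Subgraph

lemma exists_lipschitzWith_mem_iff_lt_of_cone {X : Type*} [PseudoMetricSpace X]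
    {S B : Set (X × ℝ)} {L : NNReal} (hSB : IsOpen (S ∩ B)) (hne : (S ∩ B).Nonempty)
    (hB : BddAbove (Prod.snd '' B))
    (hcone : ∀ z ∈ S ∩ B, ∀ q ∈ B, q.2 + L * dist q.1 z.1 < z.2 → q ∈ S) :
    ∃ F : X → ℝ, LipschitzWith L F ∧ ∀ q ∈ B, (q ∈ S ↔ q.2 < F q.1) := by
  obtain ⟨C, hC⟩ := hB
  have := hne.to_subtype
  have hbdd (x : X) : BddAbove (Set.range fun s : ↥(S ∩ B) => s.1.2 - L * dist x s.1.1) := by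
    refine ⟨C, Set.forall_mem_range.2 fun s => ?_⟩
    exact (sub_le_self _ (by positivity)).trans (hC ⟨s, s.2.2, rfl⟩)
  refine ⟨fun x => ⨆ s : ↥(S ∩ B), (s.1.2 - L * dist x s.1.1),
    LipschitzWith.of_le_add_mul L fun x y => ciSup_le fun s => ?_, fun q hq => ⟨fun hqS => ?_,
      fun hlt => ?_⟩⟩
  · have hle := le_ciSup (hbdd y) s
    have htri := mul_le_mul_of_nonneg_left (dist_triangle_left y s.1.1 x) L.2
    rw [NNReal.val_eq_coe] at htri
    linarith
  · have hup : ∀ᶠ ε in 𝓝[>] (0 : ℝ), (q.1, q.2 + ε) ∈ S ∩ B := by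
      have hcont : ContinuousAt (fun ε : ℝ => (q.1, q.2 + ε)) 0 := by fun_prop
      exact (hcont.eventually_mem (hSB.mem_nhds (by simpa using ⟨hqS, hq⟩))).filter_mono
        nhdsWithin_le_nhds
    obtain ⟨ε, hmem, hε⟩ := (hup.and self_mem_nhdsWithin).exists
    refine lt_of_lt_of_le ?_ (le_ciSup (hbdd q.1) ⟨_, hmem⟩)
    simpa using hε
  · obtain ⟨z, hz⟩ := exists_lt_of_lt_ciSup hlt
    exact hcone z z.2 q hq (lt_sub_iff_add_lt.1 hz)

variable {X : Type*} [NormedAddCommGroup X] [NormedSpace ℝ X] {S : Set (X × ℝ)} {c : X × ℝ} {R : ℝ}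

lemma IsStarDomain.mem_of_add_mul_dist_lt (hS : IsStarDomain S c R) {h : ℝ} (hh : 0 < h)
    {z q : X × ℝ} (hzS : z ∈ S) (hzc : dist z.1 c.1 ≤ R / 2) (hzh : z.2 ≤ c.2 + h)
    (hq : c.2 ≤ q.2) (hlt : q.2 + 2 * h / R * dist q.1 z.1 < z.2) : q ∈ S := by
  have hR := hS.radius_pos
  have hslope : 0 ≤ 2 * h / R * dist q.1 z.1 := by positivity
  have hzpos : 0 < z.2 - c.2 := by linarith
  set τ := (z.2 - q.2) / (z.2 - c.2)
  have hτpos : 0 < τ := div_pos (by linarith) hzpos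
  have hτle : τ ≤ 1 := (div_le_one hzpos).2 (by linarith)
  have hτmul : τ * (z.2 - c.2) = z.2 - q.2 := div_mul_cancel₀ _ hzpos.ne'
  -- The ray from `z` through `q` meets the level of `c` inside the ball.
  set y : X × ℝ := AffineMap.lineMap z q τ⁻¹ with hy
  have hyq : AffineMap.lineMap z y τ = q := by
    simp [hy, AffineMap.lineMap_apply, smul_smul, mul_inv_cancel₀ hτpos.ne']
  have hy_snd : y.2 = c.2 := by
    have := congrArg Prod.snd hyq
    simp only [AffineMap.lineMap_apply_module, Prod.snd_add, Prod.smul_snd, smul_eq_mul] at this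
    exact mul_left_cancel₀ hτpos.ne' (by linarith)
  have hy_fst : dist y.1 z.1 ≤ R / 2 := by
    have hscale : τ * dist y.1 z.1 = dist q.1 z.1 := by
      rw [← hyq, AffineMap.lineMap_apply]
      simp [dist_eq_norm, norm_smul, abs_of_pos hτpos]
    have hle : 2 * h / R * dist q.1 z.1 ≤ τ * h := by nlinarith
    rw [← hscale] at hle
    have hcancel : 2 * h / R * dist y.1 z.1 ≤ h := le_of_mul_le_mul_left (by linarith) hτpos
    rw [div_mul_eq_mul_div, div_le_iff₀ hR] at hcancel
    exact le_of_mul_le_mul_left (by linarith : 2 * h * _ ≤ 2 * h * (R / 2)) (by positivity)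
  rw [← hyq]
  refine hS.lineMap_mem hzS ?_ ⟨hτpos.le, hτle⟩
  rw [mem_closedBall, Prod.dist_eq, hy_snd, dist_self]
  exact max_le (by linarith [dist_triangle y.1 z.1 c.1]) hR.le

lemma IsStarDomain.exists_lipschitzWith_forall_mem_iff_lt (hS : IsStarDomain S c R) {h : ℝ}
    (hh : 0 < h) (hp : (c.1, c.2 + h) ∈ closure S) :
    ∃ (F : X → ℝ) (L : NNReal) (V : Set (X × ℝ)), LipschitzWith L F ∧ IsOpen V ∧
      (c.1, c.2 + h) ∈ V ∧ ∀ q ∈ V, (q ∈ S ↔ q.2 < F q.1) := by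
  have hR := hS.radius_pos
  set B : Set (X × ℝ) := ball c.1 (R / 2) ×ˢ ball (c.2 + h) h
  have hB : IsOpen B := isOpen_ball.prod isOpen_ball
  have hpB : (c.1, c.2 + h) ∈ B := ⟨mem_ball_self (half_pos hR), mem_ball_self hh⟩
  have hB_snd : ∀ q ∈ B, c.2 < q.2 ∧ q.2 < c.2 + 2 * h := fun q hq => by
    have := abs_lt.1 (Real.dist_eq .. ▸ mem_ball.1 hq.2)
    constructor <;> linarith
  obtain ⟨F, hF, hSF⟩ := exists_lipschitzWith_mem_iff_lt_of_cone (S := S) (B := B)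
    (L := Real.toNNReal (2 * (2 * h) / R)) (hS.isOpen.inter hB)
    (by simpa [Set.inter_comm] using mem_closure_iff.1 hp B hB hpB)
    ⟨c.2 + 2 * h, Set.forall_mem_image.2 fun q hq => (hB_snd q hq).2.le⟩
    fun z hz q hq hlt => hS.mem_of_add_mul_dist_lt (h := 2 * h) (by positivity) hz.1
      (mem_ball.1 hz.2.1).le (hB_snd z hz.2).2.le (hB_snd q hq).1.le
      (by rwa [Real.coe_toNNReal _ (by positivity)] at hlt)
  exact ⟨F, _, B, hF, hB, hpB, hSF⟩

lemma starConvex_subgraph_over_ball {F : X → ℝ} {L : NNReal} (hF : LipschitzWith L F) {x : X}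
    {r : ℝ} {a : X × ℝ} (ha : a.1 ∈ ball x r) (ha_snd : a.2 + 3 * (L * r) < F x) :
    StarConvex ℝ a {q | q.1 ∈ ball x r ∧ q.2 < F q.1} := by
  rintro z ⟨hz, hzF⟩ s t hs ht hst
  have hq : s • a.1 + t • z.1 ∈ ball x r := convex_ball x r ha hz hs ht hst
  refine ⟨hq, ?_⟩
  simp only [Prod.snd_add, Prod.fst_add, Prod.smul_snd, Prod.smul_fst, smul_eq_mul]
  rcases le_or_gt (L * dist z.1 a.1) (z.2 - a.2) with hsteep | hflat
  · have hdist : dist z.1 (s • a.1 + t • z.1) = s * dist z.1 a.1 := by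
      obtain rfl : t = 1 - s := by linarith
      rw [dist_eq_norm, dist_eq_norm, ← Real.norm_of_nonneg hs, ← norm_smul,
        Real.norm_of_nonneg hs]
      congr 1
      module
    have hFz := hF.le_add_mul z.1 (s • a.1 + t • z.1)
    rw [hdist] at hFz
    obtain rfl : t = 1 - s := by linarith
    linarith [mul_le_mul_of_nonneg_left hsteep hs]
  · have hza : dist z.1 a.1 ≤ 2 * r := by
      linarith [dist_triangle_right z.1 a.1 x, mem_ball.1 hz, mem_ball.1 ha]
    have hFx := hF.le_add_mul x (s • a.1 + t • z.1)
    rw [dist_comm] at hFx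
    have hLq := mul_le_mul_of_nonneg_left (mem_ball.1 hq).le L.coe_nonneg
    have hLza := mul_le_mul_of_nonneg_left hza L.coe_nonneg
    have hscale : t * (z.2 - a.2) ≤ t * (L * (2 * r)) := by gcongr; linarith
    have hbound : t * (L * (2 * r)) ≤ 1 * (L * (2 * r)) := by
      have hnonneg : 0 ≤ L * dist z.1 a.1 := by positivity
      exact mul_le_mul_of_nonneg_right (by linarith) (hnonneg.trans hLza)
    obtain rfl : s = 1 - t := by linarith
    linarith

lemma exists_isStarDomain_inter_of_forall_mem_iff_lt {S V : Set (X × ℝ)} {F : X → ℝ} {L : NNReal}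
    {c : X × ℝ} (hF : LipschitzWith L F) (hV : IsOpen V) (hcV : c ∈ V)
    (hSF : ∀ q ∈ V, (q ∈ S ↔ q.2 < F q.1)) (hc : c ∈ closure S) :
    ∃ (B : Set (X × ℝ)) (p : X × ℝ) (r : ℝ), IsOpen B ∧ c ∈ B ∧ IsStarDomain (S ∩ B) p r := by
  obtain ⟨δ, hδ, hδV⟩ := Metric.isOpen_iff.1 hV c hcV
  have hcF : c.2 ≤ F c.1 := by
    have hcl : IsClosed {q : X × ℝ | q.2 ≤ F q.1} :=
      isClosed_le continuous_snd (hF.continuous.comp continuous_fst)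
    exact hcl.closure_subset_iff.2 (fun q hq => ((hSF q hq.1).1 hq.2).le)
      (hV.inter_closure ⟨hcV, hc⟩)
  obtain ⟨r, hr0, hrδ⟩ : ∃ r > 0, 8 * (L * r) + 8 * r = δ :=
    ⟨δ / (8 * (L + 1)), by positivity, by field_simp⟩
  have hLr : 0 ≤ L * r := by positivity
  set B : Set (X × ℝ) := ball c.1 r ×ˢ ball c.2 δ
  have hBV : B ⊆ V := by
    rw [← ball_prod_same] at hδV
    exact (Set.prod_mono_left (ball_subset_ball (by linarith))).trans hδV
  have hSB : S ∩ B = {q | q.1 ∈ ball c.1 r ∧ q.2 < F q.1} ∩ B := by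
    ext q
    exact and_congr_left fun hq => (hSF q (hBV hq)).trans (and_iff_right hq.1).symm
  have hstar : ∀ a ∈ closedBall (c.1, c.2 - δ / 2) (r / 2), StarConvex ℝ a (S ∩ B) := fun a ha => by
    rw [← closedBall_prod_same] at ha
    have ha_fst : a.1 ∈ ball c.1 r := closedBall_subset_ball (half_lt_self hr0) ha.1
    have ha_snd := abs_le.1 (Real.dist_eq .. ▸ mem_closedBall.1 ha.2)
    have haB : a ∈ B :=
      ⟨ha_fst, by rw [mem_ball, Real.dist_eq, abs_lt]; constructor <;> linarith⟩
    rw [hSB]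
    exact (starConvex_subgraph_over_ball hF ha_fst (by linarith)).inter
      (((convex_ball _ _).prod (convex_ball _ _)).starConvex haB)
  have hB : IsOpen B := isOpen_ball.prod isOpen_ball
  refine ⟨B, _, r / 2, hB, ⟨mem_ball_self hr0, mem_ball_self hδ⟩, half_pos hr0, ?_, ?_, hstar⟩
  · rw [hSB]
    exact ((isOpen_ball.preimage continuous_fst).inter
      (isOpen_lt continuous_snd (hF.continuous.comp continuous_fst))).inter hB
  · exact mem_closure_iff.1 hc B hB ⟨mem_ball_self hr0, mem_ball_self hδ⟩ |>.mono
      (Set.inter_comm _ _).subset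

end Subgraph

lemma exists_linearIsometryEquiv_apply_eq {n : ℕ} {e : EuclideanSpace ℂ (Fin n)} (he : ‖e‖ = 1) :
    ∃ Λ : EuclideanSpace ℂ (Fin n) ≃ₗᵢ[ℝ] WithLp 2 (EuclideanSpace ℝ (Fin (2 * n - 1)) × ℝ),
      Λ e = WithLp.toLp 2 (0, 1) := by
  have hn : n ≠ 0 := by
    rintro rfl
    simp [Subsingleton.elim e 0] at he
  have hfinrank : Module.finrank ℝ (EuclideanSpace ℂ (Fin n))
      = Module.finrank ℝ (WithLp 2 (EuclideanSpace ℝ (Fin (2 * n - 1)) × ℝ)) := by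
    rw [finrank_real_of_complex, finrank_euclideanSpace_fin,
      (WithLp.linearEquiv 2 ℝ (EuclideanSpace ℝ (Fin (2 * n - 1)) × ℝ)).finrank_eq,
      Module.finrank_prod, finrank_euclideanSpace_fin, Module.finrank_self]
    omega
  let Λ₀ := (stdOrthonormalBasis ℝ (EuclideanSpace ℂ (Fin n))).equiv
    (stdOrthonormalBasis ℝ (WithLp 2 (EuclideanSpace ℝ (Fin (2 * n - 1)) × ℝ))) (finCongr hfinrank)
  exact ⟨Λ₀.trans (Submodule.reflection (Submodule.span ℝ {Λ₀ e - WithLp.toLp 2 (0, 1)})ᗮ),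
    Submodule.reflection_sub (by simp [he])⟩

section LipschitzBoundary

/-- The condition of `HasLipschitzBoundary` at a single point: near `p`, after a rigid motion, `D`
is the region below the graph of a Lipschitz function. -/
def IsLipschitzSubgraphAt {n : ℕ} (D : Set (EuclideanSpace ℂ (Fin n)))
    (p : EuclideanSpace ℂ (Fin n)) : Prop :=
  ∃ (φ : EuclideanSpace ℂ (Fin n) ≃ᵢ WithLp 2 (EuclideanSpace ℝ (Fin (2 * n - 1)) × ℝ))
    (F : EuclideanSpace ℝ (Fin (2 * n - 1)) → ℝ) (L : NNReal)
    (V : Set (WithLp 2 (EuclideanSpace ℝ (Fin (2 * n - 1)) × ℝ))),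
    LipschitzWith L F ∧ IsOpen V ∧ φ p ∈ V ∧
    ∀ q ∈ V, (φ.symm q ∈ D ↔
      (WithLp.equiv 2 (EuclideanSpace ℝ (Fin (2 * n - 1)) × ℝ) q).2 <
        F (WithLp.equiv 2 (EuclideanSpace ℝ (Fin (2 * n - 1)) × ℝ) q).1)

/-- A rigid motion onto `X × ℝ` with its Euclidean norm, regarded as an affine isomorphism onto
`X × ℝ` with the sup norm, in which boxes are products of balls. -/
def boxChart {E X : Type*} [NormedAddCommGroup E] [NormedSpace ℝ E] [NormedAddCommGroup X]
    [NormedSpace ℝ X] (φ : E ≃ᵢ WithLp 2 (X × ℝ)) : E ≃ᴬ[ℝ] X × ℝ :=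
  φ.toRealAffineIsometryEquiv.toContinuousAffineEquiv.trans
    (WithLp.prodContinuousLinearEquiv 2 ℝ X ℝ).toContinuousAffineEquiv

section

variable {E X : Type*} [NormedAddCommGroup E] [NormedSpace ℝ E] [NormedAddCommGroup X]
  [NormedSpace ℝ X] (φ : E ≃ᵢ WithLp 2 (X × ℝ))

@[simp]
lemma boxChart_apply (x : E) : boxChart φ x = WithLp.ofLp (φ x) := by
  simp [boxChart]

@[simp]
lemma boxChart_symm_apply (q : X × ℝ) : (boxChart φ).symm q = φ.symm (WithLp.toLp 2 q) :=
  (boxChart φ).injective (by simp [-EmbeddingLike.apply_eq_iff_eq])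

end

variable {n : ℕ} {D Ω : Set (EuclideanSpace ℂ (Fin n))} {p c : EuclideanSpace ℂ (Fin n)} {R : ℝ}

lemma isLipschitzSubgraphAt_iff_exists_boxChart : IsLipschitzSubgraphAt D p ↔
    ∃ (φ : EuclideanSpace ℂ (Fin n) ≃ᵢ WithLp 2 (EuclideanSpace ℝ (Fin (2 * n - 1)) × ℝ))
      (F : EuclideanSpace ℝ (Fin (2 * n - 1)) → ℝ) (L : NNReal)
      (V : Set (EuclideanSpace ℝ (Fin (2 * n - 1)) × ℝ)),
      LipschitzWith L F ∧ IsOpen V ∧ boxChart φ p ∈ V ∧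
      ∀ q ∈ V, ((boxChart φ).symm q ∈ D ↔ q.2 < F q.1) := by
  set e := WithLp.prodContinuousLinearEquiv 2 ℝ (EuclideanSpace ℝ (Fin (2 * n - 1))) ℝ
  refine exists_congr fun φ => exists_congr fun F => exists_congr fun L => ⟨?_, ?_⟩
  · rintro ⟨V, hF, hV, hpV, hVF⟩
    exact ⟨e.symm ⁻¹' V, hF, hV.preimage e.symm.continuous, hpV, fun q hq => by
      rw [boxChart_symm_apply]
      exact hVF (e.symm q) hq⟩
  · rintro ⟨V, hF, hV, hpV, hVF⟩
    exact ⟨e ⁻¹' V, hF, hV.preimage e.continuous, hpV, fun q hq => by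
      have hq_iff := hVF (e q) hq
      rwa [boxChart_symm_apply] at hq_iff⟩

lemma IsStarDomain.hasLipschitzBoundary (hΩ : IsStarDomain Ω c R) : HasLipschitzBoundary Ω := by
  intro p hp
  have hpc : p - c ≠ 0 := sub_ne_zero.2 fun h =>
    (hΩ.isOpen.frontier_eq ▸ hp).2 (h ▸ hΩ.center_mem)
  obtain ⟨Λ, hΛ⟩ := exists_linearIsometryEquiv_apply_eq (e := ‖p - c‖⁻¹ • (p - c))
    (by rw [norm_smul, norm_inv, norm_norm, inv_mul_cancel₀ (norm_ne_zero_iff.2 hpc)])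
  refine isLipschitzSubgraphAt_iff_exists_boxChart.2 ⟨Λ.toIsometryEquiv, ?_⟩
  set A := boxChart Λ.toIsometryEquiv
  have hAp : A p = ((A c).1, (A c).2 + ‖p - c‖) := by
    have hΛp : Λ p = Λ c + ‖p - c‖ • WithLp.toLp 2 (0, 1) := by
      rw [← hΛ, map_smul, smul_inv_smul₀ (norm_ne_zero_iff.2 hpc), map_sub, add_sub_cancel]
    ext <;> simp [A, hΛp]
  obtain ⟨r, hA⟩ := hΩ.exists_preimage A.symm
  rw [A.symm_symm] at hA
  rw [hAp]
  refine hA.exists_lipschitzWith_forall_mem_iff_lt (norm_pos_iff.2 hpc) ?_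
  rw [← hAp, A.preimage_symm]
  exact image_closure_subset_closure_image A.continuous ⟨p, frontier_subset_closure hp, rfl⟩

lemma IsLipschitzSubgraphAt.exists_isStarDomain (hD : IsLipschitzSubgraphAt D p)
    (hp : p ∈ closure D) :
    ∃ U c R, IsOpen U ∧ p ∈ U ∧ IsStarDomain (D ∩ U) c R := by
  obtain ⟨φ, F, L, V, hF, hV, hpV, hVF⟩ := isLipschitzSubgraphAt_iff_exists_boxChart.1 hD
  set A := boxChart φ
  obtain ⟨B, q, r, hB, hpB, hstar⟩ := exists_isStarDomain_inter_of_forall_mem_iff_lt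
    (S := A.symm ⁻¹' D) hF hV hpV hVF
    (A.preimage_symm D ▸ image_closure_subset_closure_image A.continuous ⟨p, hp, rfl⟩)
  obtain ⟨R, hR⟩ := hstar.exists_preimage A
  refine ⟨A ⁻¹' B, A.symm q, R, hB.preimage A.continuous, hpB, ?_⟩
  simpa [Set.preimage_inter, Set.preimage_preimage] using hR

end LipschitzBoundary

theorem sdomain_local_at_lipschitz_boundary_general {n : ℕ} {D : Set (EuclideanSpace ℂ (Fin n))}
    {P : EuclideanSpace ℂ (Fin n)} (hP : P ∈ closure D) (hD : IsLipschitzSubgraphAt D P) :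
    ∃ U : Set (EuclideanSpace ℂ (Fin n)),
      IsOpen U ∧ P ∈ U ∧ IsSDomain (D ∩ U) ∧ HasLipschitzBoundary (D ∩ U) := by
  obtain ⟨U, c, R, hU, hPU, hstar⟩ := hD.exists_isStarDomain hP
  exact ⟨U, hU, hPU, hstar.isSDomain, hstar.hasLipschitzBoundary⟩

/-- **Theorem 1.** If `D ⊆ ℂⁿ` is a domain with Lipschitz boundary, then every boundary
point `P` has an open neighbourhood `U` such that `D ∩ U` is an `𝒮`-domain with Lipschitz
boundary. -/
theorem sdomain_local_at_lipschitz_boundary {n : ℕ}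
    (D : Set (EuclideanSpace ℂ (Fin n))) (hD_open : IsOpen D) (hD_conn : IsConnected D)
    (hD_lip : HasLipschitzBoundary D) :
    ∀ P ∈ frontier D, ∃ U : Set (EuclideanSpace ℂ (Fin n)),
      IsOpen U ∧ P ∈ U ∧ IsSDomain (D ∩ U) ∧ HasLipschitzBoundary (D ∩ U) :=
  fun _ hP => sdomain_local_at_lipschitz_boundary_general (frontier_subset_closure hP) (hD_lip _ hP)
end
end

section
/- For every $n \ge 2$ there exist a bounded domain $\Omega \subseteq \mathbb{C}^n$ with $0 \in \partial\Omega$ and a plurisubharmonic function $u$ on $\Omega$ such that for every neighbourhood $U$ of $0$ there is no sequence of smooth plurisubharmonic functions on $\Omega \cap U$ decreasing pointwise to the restriction $u|_{\Omega \cap U}$. -/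
open MeasureTheory Real Filter Topology Metric

noncomputable section

/-!
Let `p_k = 2^{-k-1}`. Small multiples of logarithms with poles at the `p_k`, truncated at `-1`, give
a subharmonic function on the unit disc that equals `-1` on tiny discs (the cores) around the `p_k`
but is at least `-1/2` at their limit `0`. In the unit polydisc put `u` equal to this function of
`z_j` where `z_i` lies in one of the discs of radius `p_k / 8` around `p_k`, and to `-1` elsewhere.
The two definitions agree over the cores, so `u` is plurisubharmonic once the points with `z_i` on
the boundary of the discs and `z_j` outside the cores are removed.

The discs `|z_i - p_k| ≤ p_k / 4` lie in the domain over each `z_j = p_m`. As `m → ∞` they converge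
to a disc over `z_j = 0` on whose boundary `u = -1`, although `u ≥ -1/2` at its centre. A decreasing
sequence of continuous functions with limit `u` eventually has a term less than `-3/4` on this
limit circle, hence on the nearby ones, and if that term is plurisubharmonic then the mean value
inequality and continuity bound it by `-3/4` at the centre as well: a contradiction. Near `0` this
happens at all scales `p_k`.
-/
/-! ### Submean functions of one complex variable -/

/-- A real function on `ℂ` is submean at `c` if it is continuous near `c` and bounded at `c` by
its average over every small circle around `c`: the pointwise condition for a continuous function
to be subharmonic. -/
structure SubmeanAt (f : ℂ → ℝ) (c : ℂ) : Prop where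
  eventually_continuousAt : ∀ᶠ z in 𝓝 c, ContinuousAt f z
  le_circleAverage : ∀ᶠ r in 𝓝 (0 : ℝ), f c ≤ circleAverage f c r

lemma eventually_closedBall_abs_subset {c : ℂ} {s : Set ℂ} (hs : s ∈ 𝓝 c) :
    ∀ᶠ r in 𝓝 (0 : ℝ), closedBall c |r| ⊆ s :=
  (continuous_abs.tendsto' 0 0 abs_zero).eventually (eventually_closedBall_subset hs)

lemma eventually_circleIntegrable_of_continuousAt {E : Type*} [NormedAddCommGroup E] {f : ℂ → E}
    {c : ℂ} (hf : ∀ᶠ z in 𝓝 c, ContinuousAt f z) :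
    ∀ᶠ r in 𝓝 (0 : ℝ), CircleIntegrable f c r := by
  filter_upwards [eventually_closedBall_abs_subset hf] with r hr
  exact ContinuousOn.circleIntegrable' fun z hz =>
    (hr (sphere_subset_closedBall hz)).continuousWithinAt

namespace SubmeanAt

variable {f g : ℂ → ℝ} {c : ℂ}

lemma continuousAt (hf : SubmeanAt f c) : ContinuousAt f c :=
  hf.eventually_continuousAt.self_of_nhds

lemma eventually_circleIntegrable (hf : SubmeanAt f c) :
    ∀ᶠ r in 𝓝 (0 : ℝ), CircleIntegrable f c r :=
  eventually_circleIntegrable_of_continuousAt hf.eventually_continuousAt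

lemma congr (hg : SubmeanAt g c) (hfg : f =ᶠ[𝓝 c] g) : SubmeanAt f c where
  eventually_continuousAt := by
    filter_upwards [hfg.eventually_nhds, hg.eventually_continuousAt] with z hz hgz
    exact hgz.congr (EventuallyEq.symm hz)
  le_circleAverage := by
    filter_upwards [hg.le_circleAverage, eventually_closedBall_abs_subset hfg] with r hr hsub
    rwa [hfg.self_of_nhds,
      circleAverage_congr_sphere fun z hz => hsub (sphere_subset_closedBall hz)]

lemma add (hf : SubmeanAt f c) (hg : SubmeanAt g c) : SubmeanAt (fun z => f z + g z) c where
  eventually_continuousAt := by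
    filter_upwards [hf.eventually_continuousAt, hg.eventually_continuousAt] with z hfz hgz
    exact hfz.add hgz
  le_circleAverage := by
    filter_upwards [hf.le_circleAverage, hg.le_circleAverage,
      hf.eventually_circleIntegrable, hg.eventually_circleIntegrable] with r hfr hgr hfi hgi
    rw [circleAverage_fun_add hfi hgi]
    exact add_le_add hfr hgr

lemma const_mul (hf : SubmeanAt f c) {a : ℝ} (ha : 0 ≤ a) : SubmeanAt (fun z => a * f z) c where
  eventually_continuousAt := by
    filter_upwards [hf.eventually_continuousAt] with z hfz
    exact hfz.const_mul a
  le_circleAverage := by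
    filter_upwards [hf.le_circleAverage] with r hfr
    have hsmul : circleAverage (fun z => a * f z) c r = a * circleAverage f c r :=
      circleAverage_fun_smul (a := a)
    rw [hsmul]
    exact mul_le_mul_of_nonneg_left hfr ha

lemma sup (hf : SubmeanAt f c) (hg : SubmeanAt g c) : SubmeanAt (fun z => f z ⊔ g z) c := by
  have hsup : ∀ᶠ z in 𝓝 c, ContinuousAt (fun z => f z ⊔ g z) z := by
    filter_upwards [hf.eventually_continuousAt, hg.eventually_continuousAt] with z hfz hgz
    exact hfz.sup hgz
  refine ⟨hsup, ?_⟩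
  filter_upwards [hf.le_circleAverage, hg.le_circleAverage,
    hf.eventually_circleIntegrable, hg.eventually_circleIntegrable,
    eventually_circleIntegrable_of_continuousAt hsup] with r hfr hgr hfi hgi hmi
  exact sup_le (hfr.trans (circleAverage_mono hfi hmi fun _ _ => le_sup_left))
    (hgr.trans (circleAverage_mono hgi hmi fun _ _ => le_sup_right))

lemma of_isLocalMin (hf : ∀ᶠ z in 𝓝 c, ContinuousAt f z) (hc : IsLocalMin f c) :
    SubmeanAt f c where
  eventually_continuousAt := hf
  le_circleAverage := by
    filter_upwards [eventually_circleIntegrable_of_continuousAt hf,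
      eventually_closedBall_abs_subset hc] with r hfi hr
    rw [← circleAverage_const (f c) c r]
    exact circleAverage_mono (circleIntegrable_const _ _ _) hfi fun z hz =>
      hr (sphere_subset_closedBall hz)

lemma of_harmonicAt (hf : InnerProductSpace.HarmonicAt f c) : SubmeanAt f c where
  eventually_continuousAt := by
    filter_upwards [hf.eventually] with z hz
    exact hz.1.continuousAt
  le_circleAverage := by
    filter_upwards [eventually_closedBall_abs_subset hf.eventually] with r hr
    exact (InnerProductSpace.HarmonicOnNhd.circleAverage_eq fun z hz => hr hz).ge

lemma const (a : ℝ) (c : ℂ) : SubmeanAt (fun _ => a) c :=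
  of_harmonicAt (InnerProductSpace.harmonicAt_const a)

lemma sum {ι : Type*} {s : Finset ι} {f : ι → ℂ → ℝ} (hf : ∀ k ∈ s, SubmeanAt (f k) c) :
    SubmeanAt (fun z => ∑ k ∈ s, f k z) c := by
  classical
  induction s using Finset.induction_on with
  | empty => simpa using const 0 c
  | insert k s hk ih =>
    simp only [Finset.sum_insert hk]
    exact (hf k (Finset.mem_insert_self k s)).add
      (ih fun l hl => hf l (Finset.mem_insert_of_mem hl))

lemma posLog_norm {h : ℂ → ℂ} (hh : Differentiable ℂ h) (c : ℂ) :
    SubmeanAt (fun z => log⁺ ‖h z‖) c := by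
  by_cases hc : h c = 0
  · refine of_isLocalMin (.of_forall fun z =>
      (continuous_posLog.comp hh.continuous.norm).continuousAt) (.of_forall fun z => ?_)
    simpa [hc] using posLog_nonneg
  · exact (const 0 c).sup (of_harmonicAt ((hh.analyticAt c).harmonicAt_log_norm hc))

end SubmeanAt

lemma circleAverage_re {q : ℂ → ℂ} (hq : Differentiable ℂ q) (c : ℂ) (r : ℝ) :
    circleAverage (fun z => (q z).re) c r = (q c).re :=
  InnerProductSpace.HarmonicOnNhd.circleAverage_eq fun z _ => (hq.analyticAt z).harmonicAt_re

lemma circleAverage_norm_sq (c : ℂ) (r : ℝ) :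
    circleAverage (fun z => ‖z‖ ^ 2) c r = ‖c‖ ^ 2 + r ^ 2 := by
  let q : ℂ → ℂ := fun z => 2 * starRingEnd ℂ c * (z - c) + (‖c‖ ^ 2 + r ^ 2 : ℝ)
  have hq : Set.EqOn (fun z => ‖z‖ ^ 2) (fun z => (q z).re) (sphere c |r|) := fun z hz => by
    have hzc : (z.re - c.re) * (z.re - c.re) + (z.im - c.im) * (z.im - c.im) = r ^ 2 := by
      rw [← sq_abs r, ← mem_sphere_iff_norm.1 hz, ← Complex.normSq_eq_norm_sq,
        Complex.normSq_apply, Complex.sub_re, Complex.sub_im]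
    simp only [q, ← Complex.normSq_eq_norm_sq, Complex.normSq_apply, Complex.add_re,
      Complex.mul_re, Complex.mul_im, Complex.sub_re, Complex.sub_im, Complex.conj_re,
      Complex.conj_im, Complex.re_ofNat, Complex.im_ofNat, Complex.ofReal_re]
    linear_combination hzc
  rw [circleAverage_congr_sphere hq, circleAverage_re (by fun_prop)]
  simp only [q, sub_self, mul_zero, zero_add, Complex.ofReal_re]

lemma SubmeanAt.not_isLocalMax_add_mul_norm_sq {f : ℂ → ℝ} {c : ℂ} (hf : SubmeanAt f c) {ε : ℝ}
    (hε : 0 < ε) : ¬ IsLocalMax (fun z => f z + ε * ‖z‖ ^ 2) c := by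
  intro hmax
  have hfalse : ∀ᶠ _ in 𝓝[>] (0 : ℝ), False := by
    filter_upwards [nhdsWithin_le_nhds hf.le_circleAverage,
      nhdsWithin_le_nhds hf.eventually_circleIntegrable,
      nhdsWithin_le_nhds (eventually_closedBall_abs_subset hmax), self_mem_nhdsWithin]
      with r hmean hint hball hr
    have hsq : CircleIntegrable (fun z : ℂ => ε * ‖z‖ ^ 2) c r :=
      ContinuousOn.circleIntegrable' (by fun_prop)
    have havg : circleAverage (fun z : ℂ => ε * ‖z‖ ^ 2) c r = ε * (‖c‖ ^ 2 + r ^ 2) := by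
      rw [← circleAverage_norm_sq]
      exact circleAverage_fun_smul (a := ε)
    have hle : circleAverage (fun z => f z + ε * ‖z‖ ^ 2) c r ≤ f c + ε * ‖c‖ ^ 2 :=
      circleAverage_mono_on_of_le_circle (hint.add hsq)
        fun z hz => hball (sphere_subset_closedBall hz)
    rw [circleAverage_fun_add hint hsq, havg] at hle
    linarith [mul_pos hε (pow_pos (Set.mem_Ioi.1 hr) 2)]
  exact hfalse.exists.elim fun _ h => h

lemma le_of_submeanAt_of_forall_frontier_le {f : ℂ → ℝ} {K : Set ℂ} {M : ℝ}
    (hK : IsCompact K) (hf : ContinuousOn f K) (hsub : ∀ z ∈ interior K, SubmeanAt f z)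
    (hM : ∀ z ∈ frontier K, f z ≤ M) {z : ℂ} (hz : z ∈ K) : f z ≤ M := by
  obtain ⟨R, hR⟩ := hK.isBounded.exists_norm_le
  have hpert : ∀ ε > 0, f z ≤ M + ε * R ^ 2 := fun ε hε => by
    have hsq : ContinuousOn (fun z : ℂ => ε * ‖z‖ ^ 2) K := by fun_prop
    obtain ⟨w, hwK, hw⟩ := hK.exists_isMaxOn ⟨z, hz⟩ (hf.add hsq)
    have hwf : w ∈ frontier K := ⟨subset_closure hwK, fun hwi =>
      (hsub w hwi).not_isLocalMax_add_mul_norm_sq hε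
        (hw.isLocalMax (mem_interior_iff_mem_nhds.1 hwi))⟩
    calc f z ≤ f z + ε * ‖z‖ ^ 2 := le_add_of_nonneg_right (by positivity)
      _ ≤ f w + ε * ‖w‖ ^ 2 := hw hz
      _ ≤ M + ε * R ^ 2 := by
        gcongr
        exacts [hM w hwf, hR w hwK]
  have hlim : Tendsto (fun ε : ℝ => M + ε * R ^ 2) (𝓝[>] 0) (𝓝 M) :=
    (Continuous.tendsto' (by fun_prop) 0 M (by simp)).mono_left nhdsWithin_le_nhds
  exact ge_of_tendsto hlim (eventually_mem_nhdsWithin.mono hpert)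

open AddCircle in
lemma exists_differentiable_re_eq_of_mem_span_fourier {T : ℝ} {p : C(AddCircle T, ℂ)}
    (hp : p ∈ Submodule.span ℂ (Set.range (@fourier T))) :
    ∃ q : ℂ → ℂ, Differentiable ℂ q ∧ ∀ x, (p x).re = (q (toCircle x)).re := by
  suffices h : ∀ a : ℂ, ∃ q : ℂ → ℂ, Differentiable ℂ q ∧
      ∀ x, (a * p x).re = (q (toCircle x)).re by simpa using h 1
  induction hp using Submodule.span_induction with
  | mem p hp =>
    obtain ⟨k, rfl⟩ := hp
    intro a
    obtain ⟨m, rfl | rfl⟩ := k.eq_nat_or_neg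
    · refine ⟨fun z => a * z ^ m, by fun_prop, fun x => ?_⟩
      simp [fourier_apply, toCircle_nsmul]
    · -- A negative power of `z` on the circle is a conjugate, hence has the real part of a power.
      refine ⟨fun z => starRingEnd ℂ a * z ^ m, by fun_prop, fun x => ?_⟩
      rw [← Complex.conj_re (a * _), map_mul, fourier_neg, Complex.conj_conj]
      simp [fourier_apply, toCircle_nsmul]
  | zero => exact fun a => ⟨0, differentiable_zero, by simp⟩
  | add p₁ p₂ _ _ h₁ h₂ =>
    intro a
    obtain ⟨q₁, hq₁, he₁⟩ := h₁ a
    obtain ⟨q₂, hq₂, he₂⟩ := h₂ a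
    exact ⟨q₁ + q₂, hq₁.add hq₂, fun x => by
      simp only [ContinuousMap.add_apply, mul_add, Complex.add_re, he₁, he₂, Pi.add_apply]⟩
  | smul b p _ h =>
    intro a
    obtain ⟨q, hq, he⟩ := h (a * b)
    exact ⟨q, hq, fun x => by rw [← he, ContinuousMap.smul_apply, smul_eq_mul, mul_assoc]⟩

lemma exists_differentiable_re_near_on_unit_circle {g : ℂ → ℝ} (hg : ContinuousOn g (sphere 0 1))
    {ε : ℝ} (hε : 0 < ε) :
    ∃ q : ℂ → ℂ, Differentiable ℂ q ∧ ∀ z ∈ sphere (0 : ℂ) 1, |g z - (q z).re| < ε := by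
  let G : C(UnitAddCircle, ℂ) :=
    ⟨fun x => (g (AddCircle.toCircle x) : ℝ), Complex.continuous_ofReal.comp
      (hg.comp_continuous (by fun_prop) fun x => by simp [Circle.norm_coe])⟩
  have hG : G ∈ closure (Submodule.span ℂ (Set.range (@fourier (1 : ℝ))) :
      Set C(UnitAddCircle, ℂ)) := by
    rw [← Submodule.topologicalClosure_coe, span_fourier_closure_eq_top]
    trivial
  obtain ⟨p, hp, hGp⟩ := Metric.mem_closure_iff.1 hG ε hε
  obtain ⟨q, hq, hpq⟩ := exists_differentiable_re_eq_of_mem_span_fourier hp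
  refine ⟨q, hq, fun z hz => ?_⟩
  obtain ⟨x, hx⟩ := (AddCircle.homeomorphCircle one_ne_zero).surjective (⟨z, hz⟩ : Circle)
  have hxz : (AddCircle.toCircle (x : UnitAddCircle) : ℂ) = z := by
    rw [← AddCircle.homeomorphCircle_apply one_ne_zero, hx]
  calc |g z - (q z).re| = |(G x - p x).re| := by simp [G, hxz, hpq]
    _ ≤ ‖G x - p x‖ := Complex.abs_re_le_norm _
    _ = dist (G x) (p x) := (dist_eq_norm _ _).symm
    _ ≤ dist G p := ContinuousMap.dist_apply_le_dist x
    _ < ε := hGp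

lemma exists_differentiable_re_near_on_sphere {g : ℂ → ℝ} {c : ℂ} {R : ℝ} (hR : 0 < R)
    (hg : ContinuousOn g (sphere c R)) {ε : ℝ} (hε : 0 < ε) :
    ∃ q : ℂ → ℂ, Differentiable ℂ q ∧ ∀ z ∈ sphere c R, |g z - (q z).re| < ε := by
  obtain ⟨q, hq, happrox⟩ := exists_differentiable_re_near_on_unit_circle
    (g := fun w => g (c + R * w)) (hg.comp (by fun_prop) fun w hw => by
      simpa [abs_of_pos hR, hR.ne'] using hw) hε
  refine ⟨fun z => q ((z - c) / R), by fun_prop, fun z hz => ?_⟩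
  have hR' : (R : ℂ) ≠ 0 := Complex.ofReal_ne_zero.2 hR.ne'
  have hz' : (z - c) / R ∈ sphere (0 : ℂ) 1 := by
    rw [mem_sphere_zero_iff_norm, norm_div, mem_sphere_iff_norm.1 hz, Complex.norm_real,
      Real.norm_of_nonneg hR.le, div_self hR.ne']
  simpa [mul_div_cancel₀ _ hR'] using happrox _ hz'

lemma le_circleAverage_of_submeanAt {f : ℂ → ℝ} {c : ℂ} {R : ℝ} (hR : 0 < R)
    (hf : ContinuousOn f (closedBall c R)) (hsub : ∀ z ∈ ball c R, SubmeanAt f z) :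
    f c ≤ circleAverage f c R := by
  refine le_of_forall_pos_le_add fun ε hε => ?_
  have hfs : ContinuousOn f (sphere c R) := hf.mono sphere_subset_closedBall
  obtain ⟨q, hq, happrox⟩ := exists_differentiable_re_near_on_sphere hR hfs (half_pos hε)
  have hqc : Continuous fun z => (q z).re := Complex.continuous_re.comp hq.continuous
  have hcenter : f c + (-q c).re ≤ ε / 2 := by
    refine le_of_submeanAt_of_forall_frontier_le (f := fun z => f z + (-q z).re)
      (isCompact_closedBall c R) (hf.add ?_) ?_ ?_ (mem_closedBall_self hR.le)
    · exact (Complex.continuous_re.comp hq.neg.continuous).continuousOn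
    · rw [interior_closedBall c hR.ne']
      exact fun z hz => (hsub z hz).add (.of_harmonicAt (hq.neg.analyticAt z).harmonicAt_re)
    · rw [frontier_closedBall c hR.ne']
      intro z hz
      rw [Complex.neg_re]
      linarith [(abs_lt.1 (happrox z hz)).2]
  have hmean : (q c).re ≤ circleAverage f c R + ε / 2 := by
    rw [← circleAverage_re hq c R, ← circleAverage_const (ε / 2) c R,
      ← circleAverage_fun_add (hfs.circleIntegrable hR.le) (circleIntegrable_const _ _ _)]
    refine circleAverage_mono (hqc.continuousOn.circleIntegrable hR.le)
      ((hfs.add continuousOn_const).circleIntegrable hR.le) fun z hz => ?_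
    rw [abs_of_pos hR] at hz
    linarith [(abs_lt.1 (happrox z hz)).1]
  rw [Complex.neg_re] at hcenter
  linarith

/-! ### Decreasing limits of plurisubharmonic functions -/

section PSH

variable {n : ℕ} {u : EuclideanSpace ℂ (Fin n) → EReal} {a b : EuclideanSpace ℂ (Fin n)}

lemma circleMean_eq_iInf_circleAverage (u : EuclideanSpace ℂ (Fin n) → EReal)
    (a b : EuclideanSpace ℂ (Fin n)) :
    circleMean u a b = ⨅ m : ℕ,
      ((circleAverage (fun l => (u (a + l • b) ⊔ ((-m : ℝ) : EReal)).toReal) 0 1 : ℝ) : EReal) := by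
  simp only [circleMean, circleAverage, circleMap, zero_add, Complex.ofReal_one, one_mul,
    smul_eq_mul]

lemma toReal_coe_sup_coe (x y : ℝ) : ((x : EReal) ⊔ (y : EReal)).toReal = x ⊔ y := by
  rw [← EReal.coe_strictMono.monotone.map_sup, EReal.toReal_coe]

lemma le_coe_of_antitone_of_tendsto {f : ℕ → ℝ} {x : EReal} (hf : Antitone f)
    (hlim : Tendsto (fun k => (f k : EReal)) atTop (𝓝 x)) (k : ℕ) : x ≤ f k :=
  (EReal.coe_strictMono.monotone.comp_antitone hf).le_of_tendsto hlim k

lemma tendsto_circleAverage_of_antitone {f : ℕ → ℂ → ℝ} {g : ℂ → ℝ} {c : ℂ} {R m : ℝ}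
    (hf : ∀ k, CircleIntegrable (f k) c R)
    (hanti : ∀ z ∈ sphere c |R|, Antitone fun k => f k z)
    (hm : ∀ k, ∀ z ∈ sphere c |R|, m ≤ f k z)
    (hlim : ∀ z ∈ sphere c |R|, Tendsto (fun k => f k z) atTop (𝓝 (g z))) :
    Tendsto (fun k => circleAverage (f k) c R) atTop (𝓝 (circleAverage g c R)) := by
  refine (intervalIntegral.tendsto_integral_filter_of_dominated_convergence
    (fun θ => |f 0 (circleMap c R θ)| + |m|)
    (.of_forall fun k => (hf k).def'.aestronglyMeasurable)
    (.of_forall fun k => .of_forall fun θ _ => ?_) ((hf 0).abs.add (circleIntegrable_const _ _ _))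
    (.of_forall fun θ _ => hlim _ (circleMap_mem_sphere' c R θ))).const_smul _
  have hθ := circleMap_mem_sphere' c R θ
  exact abs_le.2 ⟨by linarith [hm k _ hθ, neg_abs_le m, abs_nonneg (f 0 (circleMap c R θ))],
    by linarith [hanti _ hθ k.zero_le, le_abs_self (f 0 (circleMap c R θ)), abs_nonneg m]⟩

lemma le_circleMean_of_tendsto {v : ℕ → EuclideanSpace ℂ (Fin n) → ℝ}
    (hcont : ∀ k, ContinuousOn (fun l : ℂ => v k (a + l • b)) (sphere 0 1))
    (hanti : ∀ l ∈ sphere (0 : ℂ) 1, Antitone fun k => v k (a + l • b))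
    (hlim : ∀ l ∈ sphere (0 : ℂ) 1,
      Tendsto (fun k => (v k (a + l • b) : EReal)) atTop (𝓝 (u (a + l • b))))
    (hle : ∀ k, u a ≤ ((circleAverage (fun l => v k (a + l • b)) 0 1 : ℝ) : EReal)) :
    u a ≤ circleMean u a b := by
  rw [circleMean_eq_iInf_circleAverage]
  refine le_iInf fun m => ?_
  have hint : ∀ k, CircleIntegrable (fun l => v k (a + l • b)) 0 1 := fun k =>
    (hcont k).circleIntegrable zero_le_one
  have hint_sup : ∀ k, CircleIntegrable (fun l => v k (a + l • b) ⊔ -m) 0 1 := fun k =>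
    ((hcont k).sup continuousOn_const).circleIntegrable zero_le_one
  have htends : Tendsto (fun k => circleAverage (fun l => v k (a + l • b) ⊔ -m) 0 1) atTop
      (𝓝 (circleAverage (fun l => (u (a + l • b) ⊔ ((-m : ℝ) : EReal)).toReal) 0 1)) := by
    refine tendsto_circleAverage_of_antitone hint_sup ?_ (fun _ _ _ => le_sup_right) ?_ <;>
      simp only [abs_one] <;> intro l hl
    · exact fun j k hjk => sup_le_sup_right (hanti l hl hjk) _
    · have hlt : u (a + l • b) ≠ ⊤ := ne_top_of_le_ne_top (EReal.coe_ne_top (v 0 (a + l • b)))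
        (le_coe_of_antitone_of_tendsto (hanti l hl) (hlim l hl) 0)
      have hsup := (EReal.tendsto_toReal (max_lt hlt.lt_top (EReal.coe_lt_top (-m))).ne
        (ne_bot_of_le_ne_bot (EReal.coe_ne_bot (-m)) le_sup_right)).comp
        ((hlim l hl).max (tendsto_const_nhds (x := ((-m : ℝ) : EReal))))
      simpa only [Function.comp_def, toReal_coe_sup_coe] using hsup
  refine ge_of_tendsto' ((continuous_coe_real_ereal.tendsto _).comp htends) fun k => ?_
  exact (hle k).trans (EReal.coe_le_coe_iff.2
    (circleAverage_mono (hint k) (hint_sup k) fun _ _ => le_sup_left))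

lemma exists_disc_subset_of_monotone {O : ℕ → Set (EuclideanSpace ℂ (Fin n))}
    (hO : ∀ N, IsOpen (O N)) (hmono : Monotone O)
    (hdisc : ∀ l : ℂ, ‖l‖ ≤ 1 → a + l • b ∈ ⋃ N, O N) :
    ∃ N, ∀ l : ℂ, ‖l‖ ≤ 1 → a + l • b ∈ O N := by
  have hcompact : IsCompact ((fun l : ℂ => a + l • b) '' closedBall 0 1) :=
    (isCompact_closedBall 0 1).image (by fun_prop)
  obtain ⟨N, hN⟩ := hcompact.elim_directed_cover O hO
    (Set.image_subset_iff.2 fun l hl => hdisc l (mem_closedBall_zero_iff.1 hl))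
    hmono.directed_le
  exact ⟨N, fun l hl => hN ⟨l, mem_closedBall_zero_iff.2 hl, rfl⟩⟩

lemma isPSHOn_iUnion_of_tendsto {O : ℕ → Set (EuclideanSpace ℂ (Fin n))}
    {F : ℕ → EuclideanSpace ℂ (Fin n) → ℝ}
    (hO : ∀ N, IsOpen (O N)) (hmono : Monotone O) (hcont : ∀ N, ContinuousOn (F N) (O N))
    (hsub : ∀ N a b (l : ℂ), a + l • b ∈ O N → SubmeanAt (fun w => F N (a + w • b)) l)
    (hanti : ∀ z ∈ ⋃ N, O N, Antitone fun N => F N z)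
    (hlim : ∀ z ∈ ⋃ N, O N, Tendsto (fun N => (F N z : EReal)) atTop (𝓝 (u z)))
    (hbot : ∀ z ∈ ⋃ N, O N, ∃ w ∈ connectedComponentIn (⋃ N, O N) z, u w ≠ ⊥) :
    IsPSHOn (⋃ N, O N) u := by
  have hle : ∀ z ∈ ⋃ N, O N, ∀ N, u z ≤ F N z := fun z hz =>
    le_coe_of_antitone_of_tendsto (hanti z hz) (hlim z hz)
  refine ⟨fun z hz y hy => ?_, fun z hz => ne_top_of_le_ne_top (EReal.coe_ne_top _) (hle z hz 0),
    hbot, fun a b hdisc => ?_⟩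
  · obtain ⟨M, hM⟩ := Set.mem_iUnion.1 hz
    obtain ⟨N, hlt, hMN⟩ :=
      (((hlim z hz).eventually_lt_const hy).and (eventually_ge_atTop M)).exists
    have hzN : O N ∈ 𝓝 z := (hO N).mem_nhds (hmono hMN hM)
    have hlt_near : ∀ᶠ w in 𝓝 z, (F N w : EReal) < y :=
      (continuous_coe_real_ereal.continuousAt.comp
        ((hcont N).continuousAt hzN)).eventually_lt_const hlt
    filter_upwards [nhdsWithin_le_nhds hlt_near, self_mem_nhdsWithin] with w hw hwO
    exact (hle w hwO N).trans_lt hw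
  · obtain ⟨M, hM⟩ := exists_disc_subset_of_monotone hO hmono hdisc
    have hM' : ∀ k, ∀ l ∈ closedBall (0 : ℂ) 1, a + l • b ∈ O (k + M) := fun k l hl =>
      hmono (M.le_add_left k) (hM l (mem_closedBall_zero_iff.1 hl))
    have hmem : ∀ l ∈ sphere (0 : ℂ) 1, a + l • b ∈ ⋃ N, O N := fun l hl =>
      hdisc l (mem_sphere_zero_iff_norm.1 hl).le
    have hdcont : ∀ k, ContinuousOn (fun l : ℂ => F (k + M) (a + l • b)) (closedBall 0 1) :=
      fun k => (hcont _).comp (by fun_prop) (hM' k)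
    refine le_circleMean_of_tendsto (v := fun k => F (k + M))
      (fun k => (hdcont k).mono sphere_subset_closedBall)
      (fun l hl j k hjk => hanti _ (hmem l hl) (Nat.add_le_add_right hjk M))
      (fun l hl => (hlim _ (hmem l hl)).comp (tendsto_add_atTop_nat M)) fun k => ?_
    have hcenter := le_circleAverage_of_submeanAt one_pos (hdcont k) fun l hl =>
      hsub _ _ _ _ (hM' k l (ball_subset_closedBall hl))
    rw [zero_smul, add_zero] at hcenter
    have ha := hdisc 0 (by simp)
    rw [zero_smul, add_zero] at ha
    exact (hle a ha _).trans (EReal.coe_le_coe_iff.2 hcenter)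

lemma IsPSHOn.le_of_forall_circle_le {O : Set (EuclideanSpace ℂ (Fin n))}
    {v : EuclideanSpace ℂ (Fin n) → ℝ} {M : ℝ} (hv : IsPSHOn O fun z => (v z : EReal))
    (hcont : ContinuousOn v O) (hdisc : ∀ l : ℂ, ‖l‖ ≤ 1 → a + l • b ∈ O)
    (hM : ∀ l ∈ sphere (0 : ℂ) 1, v (a + l • b) ≤ M) : v a ≤ M := by
  obtain ⟨m, hm⟩ := exists_nat_ge (-M)
  have hmean := (hv.2.2.2 a b hdisc).trans
    ((circleMean_eq_iInf_circleAverage _ a b).trans_le (iInf_le _ m))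
  simp only [toReal_coe_sup_coe, EReal.coe_le_coe_iff] at hmean
  have hint : CircleIntegrable (fun l => v (a + l • b) ⊔ -m) 0 1 :=
    ((hcont.comp (by fun_prop) fun l hl => hdisc l (mem_sphere_zero_iff_norm.1 hl).le).sup
      continuousOn_const).circleIntegrable zero_le_one
  refine hmean.trans (circleAverage_mono_on_of_le_circle hint fun l hl => ?_)
  rw [abs_one] at hl
  exact sup_le (hM l hl) (by linarith)

lemma IsPSHOn.le_of_tendsto_discs {O : Set (EuclideanSpace ℂ (Fin n))}
    {v : EuclideanSpace ℂ (Fin n) → ℝ} {M : ℝ} (hv : IsPSHOn O fun z => (v z : EReal))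
    (hO : IsOpen O) (hcont : ContinuousOn v O) (ha : a ∈ O)
    (hcircle : ∀ l ∈ sphere (0 : ℂ) 1, a + l • b ∈ O ∧ v (a + l • b) < M)
    {p : ℕ → EuclideanSpace ℂ (Fin n)} (hp : Tendsto p atTop (𝓝 a))
    (hdisc : ∀ᶠ j in atTop, ∀ l : ℂ, ‖l‖ ≤ 1 → p j + l • b ∈ O) : v a ≤ M := by
  have hnear : ∀ᶠ x in 𝓝 a, ∀ l ∈ sphere (0 : ℂ) 1, v (x + l • b) < M := by
    refine (isCompact_sphere 0 1).eventually_forall_of_forall_eventually fun l hl => ?_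
    obtain ⟨hmem, hlt⟩ := hcircle l hl
    have hline : ContinuousAt (fun q : EuclideanSpace ℂ (Fin n) × ℂ => q.1 + q.2 • b) (a, l) := by
      fun_prop
    exact (ContinuousAt.comp (f := fun q : EuclideanSpace ℂ (Fin n) × ℂ => q.1 + q.2 • b)
      (hcont.continuousAt (hO.mem_nhds hmem)) hline).eventually_lt_const hlt
  refine le_of_tendsto ((hcont.continuousAt (hO.mem_nhds ha)).tendsto.comp hp) ?_
  filter_upwards [hdisc, hp.eventually hnear] with j hj hlt
  exact hv.le_of_forall_circle_le hcont hj fun l hl => (hlt l hl).le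

lemma exists_forall_lt_of_antitone {X : Type*} [TopologicalSpace X] {O K : Set X}
    {v : ℕ → X → ℝ} {u : X → EReal} {M : ℝ} (hO : IsOpen O) (hK : IsCompact K) (hKO : K ⊆ O)
    (hcont : ∀ k, ContinuousOn (v k) O) (hanti : ∀ z ∈ O, Antitone fun k => v k z)
    (hlim : ∀ z ∈ O, Tendsto (fun k => (v k z : EReal)) atTop (𝓝 (u z)))
    (hu : ∀ z ∈ K, u z < M) : ∃ k, ∀ z ∈ K, v k z < M := by
  have hcover : K ⊆ ⋃ k, O ∩ v k ⁻¹' Set.Iio M := fun z hz => by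
    obtain ⟨k, hk⟩ := ((hlim z (hKO hz)).eventually_lt_const (hu z hz)).exists
    exact Set.mem_iUnion.2 ⟨k, hKO hz, EReal.coe_lt_coe_iff.1 hk⟩
  obtain ⟨k, hk⟩ := hK.elim_directed_cover _
    (fun k => (hcont k).isOpen_inter_preimage hO isOpen_Iio) hcover
    (Monotone.directed_le fun j k hjk z hz => ⟨hz.1, (hanti z hz.1 hjk).trans_lt hz.2⟩)
  exact ⟨k, fun z hz => (hk hz).2⟩

lemma le_of_tendsto_discs_of_antitone {O : Set (EuclideanSpace ℂ (Fin n))}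
    {v : ℕ → EuclideanSpace ℂ (Fin n) → ℝ} {M : ℝ} (hO : IsOpen O)
    (hv : ∀ k, IsPSHOn O fun z => (v k z : EReal)) (hcont : ∀ k, ContinuousOn (v k) O)
    (hanti : ∀ z ∈ O, Antitone fun k => v k z)
    (hlim : ∀ z ∈ O, Tendsto (fun k => (v k z : EReal)) atTop (𝓝 (u z))) (ha : a ∈ O)
    (hcircle : ∀ l ∈ sphere (0 : ℂ) 1, a + l • b ∈ O ∧ u (a + l • b) < M)
    {p : ℕ → EuclideanSpace ℂ (Fin n)} (hp : Tendsto p atTop (𝓝 a))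
    (hdisc : ∀ᶠ j in atTop, ∀ l : ℂ, ‖l‖ ≤ 1 → p j + l • b ∈ O) : u a ≤ M := by
  have hK : IsCompact ((fun l : ℂ => a + l • b) '' sphere 0 1) :=
    (isCompact_sphere 0 1).image (by fun_prop)
  obtain ⟨k, hk⟩ := exists_forall_lt_of_antitone hO hK
    (Set.image_subset_iff.2 fun l hl => (hcircle l hl).1) hcont hanti hlim
    (Set.forall_mem_image.2 fun l hl => (hcircle l hl).2)
  have hvM : v k a ≤ M := (hv k).le_of_tendsto_discs hO (hcont k) ha
    (fun l hl => ⟨(hcircle l hl).1, hk _ (Set.mem_image_of_mem _ hl)⟩) hp hdisc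
  exact (le_coe_of_antitone_of_tendsto (hanti a ha) (hlim a ha) k).trans
    (EReal.coe_le_coe_iff.2 hvM)

end PSH

/-! ### Logarithmic spikes -/

/-- The radius at which `ε * log (‖· - p‖ / 2)` takes the value `-1`. -/
def spikeRadius (ε : ℝ) : ℝ := 2 * exp (-(1 / ε))

/-- The subharmonic function `max (ε * log (‖w - p‖ / 2)) (-1)`: a spike of depth `-1` at `p`,
written with `log⁺` so that `log 0 = 0` causes no trouble. -/
def logSpike (ε : ℝ) (p w : ℂ) : ℝ := ε * log⁺ (‖w - p‖ / spikeRadius ε) - 1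

section LogSpike

variable {ε : ℝ} {p w : ℂ}

lemma spikeRadius_pos (ε : ℝ) : 0 < spikeRadius ε := by
  unfold spikeRadius
  positivity

lemma logSpike_nonpos (hε : 0 < ε) (hw : ‖w - p‖ ≤ 2) : logSpike ε p w ≤ 0 := by
  have hratio : ‖w - p‖ / spikeRadius ε ≤ exp (1 / ε) := by
    rw [div_le_iff₀ (spikeRadius_pos ε), spikeRadius, mul_left_comm, ← exp_add, add_neg_cancel,
      exp_zero, mul_one]
    exact hw
  have hlog : log⁺ (‖w - p‖ / spikeRadius ε) ≤ 1 / ε := by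
    refine (posLog_le_posLog (div_nonneg (norm_nonneg _) (spikeRadius_pos ε).le) hratio).trans_eq ?_
    rw [posLog_apply, log_exp, max_eq_right (by positivity)]
  unfold logSpike
  linarith [(mul_le_mul_of_nonneg_left hlog hε.le).trans_eq (mul_one_div_cancel hε.ne')]

lemma logSpike_eq_neg_one (hw : w ∈ ball p (spikeRadius ε)) : logSpike ε p w = -1 := by
  have hlog : log⁺ (‖w - p‖ / spikeRadius ε) = 0 := by
    rw [posLog_eq_zero_iff, abs_of_nonneg (div_nonneg (norm_nonneg _) (spikeRadius_pos ε).le)]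
    exact (div_le_one (spikeRadius_pos ε)).2 (mem_ball_iff_norm.1 hw).le
  rw [logSpike, hlog, mul_zero, zero_sub]

lemma mul_log_le_logSpike (hε : 0 < ε) (hw : w ≠ p) :
    ε * log (‖w - p‖ / 2) ≤ logSpike ε p w := by
  have hlog : log (‖w - p‖ / 2) + 1 / ε = log (‖w - p‖ / spikeRadius ε) := by
    have hnorm : ‖w - p‖ / 2 ≠ 0 := div_ne_zero (norm_ne_zero_iff.2 (sub_ne_zero.2 hw)) two_ne_zero
    rw [spikeRadius, ← div_div, log_div hnorm (exp_ne_zero _), log_exp, sub_neg_eq_add]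
  calc ε * log (‖w - p‖ / 2) = ε * log (‖w - p‖ / spikeRadius ε) - 1 := by
        rw [← hlog]
        field_simp
        ring
    _ ≤ logSpike ε p w :=
        sub_le_sub_right (mul_le_mul_of_nonneg_left (le_max_right _ _) hε.le) 1

lemma submeanAt_logSpike_comp (hε : 0 < ε) {h : ℂ → ℂ} (hh : Differentiable ℂ h) (c : ℂ) :
    SubmeanAt (fun z => logSpike ε p (h z)) c := by
  have hnorm : ∀ z, ‖(h z - p) / spikeRadius ε‖ = ‖h z - p‖ / spikeRadius ε := fun z => by
    rw [norm_div, Complex.norm_real, norm_of_nonneg (spikeRadius_pos ε).le]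
  have hlog := SubmeanAt.posLog_norm ((hh.sub_const p).div_const (spikeRadius ε : ℂ)) c
  simp only [hnorm] at hlog
  exact (hlog.const_mul hε.le).add (.const (-1) c)

end LogSpike

/-- The centres `2⁻¹, 2⁻², 2⁻³, …` of the spikes. -/
def spikeCenter (k : ℕ) : ℝ := (1 / 2) ^ (k + 1)

/-- The weights of the spikes, small enough for `∑ k, spikeWeight k * log (spikeCenter k / 2)` to
converge to a value above `-1`. -/
def spikeWeight (k : ℕ) : ℝ := (1 / 4) ^ (k + 2)

/-- The union of the discs on which one of the first `N` spikes attains its minimum `-1`. -/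
def spikeCore (N : ℕ) : Set ℂ :=
  ⋃ k < N, ball (spikeCenter k : ℂ) (spikeRadius (spikeWeight k))

/-- The sum of the first `N` spikes, truncated at `-1`. -/
def spikeSum (N : ℕ) (w : ℂ) : ℝ :=
  (∑ k ∈ Finset.range N, logSpike (spikeWeight k) (spikeCenter k) w) ⊔ -1

lemma spikeCenter_pos (k : ℕ) : 0 < spikeCenter k := by
  unfold spikeCenter
  positivity

lemma spikeCenter_le_half (k : ℕ) : spikeCenter k ≤ 1 / 2 :=
  pow_le_of_le_one (by norm_num) (by norm_num) k.succ_ne_zero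

lemma norm_spikeCenter (k : ℕ) : ‖(spikeCenter k : ℂ)‖ = spikeCenter k := by
  rw [Complex.norm_real, norm_of_nonneg (spikeCenter_pos k).le]

lemma norm_spikeCenter_lt_one (k : ℕ) : ‖(spikeCenter k : ℂ)‖ < 1 := by
  linarith [norm_spikeCenter k, spikeCenter_le_half k]

lemma tendsto_spikeCenter : Tendsto spikeCenter atTop (𝓝 0) :=
  (tendsto_pow_atTop_nhds_zero_of_lt_one (by norm_num) (by norm_num)).comp (tendsto_add_atTop_nat 1)

lemma tendsto_ofReal_spikeCenter : Tendsto (fun k => (spikeCenter k : ℂ)) atTop (𝓝 0) := by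
  exact_mod_cast (Complex.continuous_ofReal.tendsto 0).comp tendsto_spikeCenter

lemma spikeWeight_pos (k : ℕ) : 0 < spikeWeight k := by
  unfold spikeWeight
  positivity

lemma logSpike_spikeCenter_nonpos (k : ℕ) {w : ℂ} (hw : ‖w‖ ≤ 1) :
    logSpike (spikeWeight k) (spikeCenter k) w ≤ 0 := by
  refine logSpike_nonpos (spikeWeight_pos k) ((norm_sub_le _ _).trans ?_)
  rw [norm_spikeCenter]
  linarith [spikeCenter_le_half k]

lemma isOpen_spikeCore (N : ℕ) : IsOpen (spikeCore N) :=
  isOpen_biUnion fun _ _ => isOpen_ball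

lemma spikeCore_mono : Monotone spikeCore := fun _ _ hMN =>
  Set.biUnion_mono (fun _ hk => lt_of_lt_of_le hk hMN) fun _ _ => subset_rfl

lemma spikeCenter_mem_spikeCore (k : ℕ) : (spikeCenter k : ℂ) ∈ spikeCore (k + 1) :=
  Set.mem_biUnion k.lt_succ_self (mem_ball_self (spikeRadius_pos _))

lemma spikeRadius_spikeWeight_le (k : ℕ) : spikeRadius (spikeWeight k) ≤ spikeCenter k := by
  have hexp : (2 : ℝ) ^ (k + 2) ≤ exp (1 / spikeWeight k) := by
    rw [spikeWeight, one_div_pow, one_div_one_div]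
    calc (2 : ℝ) ^ (k + 2) ≤ 4 ^ (k + 2) := pow_le_pow_left₀ zero_le_two (by norm_num) _
      _ ≤ 4 ^ (k + 2) + 1 := le_add_of_nonneg_right zero_le_one
      _ ≤ exp (4 ^ (k + 2)) := add_one_le_exp _
  rw [spikeRadius, spikeCenter, exp_neg, ← div_eq_mul_inv, div_le_iff₀ (exp_pos _), one_div_pow,
    one_div_mul_eq_div, le_div_iff₀ (by positivity)]
  linarith [pow_succ (2 : ℝ) (k + 1)]

lemma zero_notMem_spikeCore (N : ℕ) : (0 : ℂ) ∉ spikeCore N := by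
  simp only [spikeCore, Set.mem_iUnion, mem_ball_iff_norm, zero_sub, norm_neg, norm_spikeCenter,
    not_exists, not_lt]
  exact fun k _ => spikeRadius_spikeWeight_le k

lemma neg_one_le_spikeSum (N : ℕ) (w : ℂ) : -1 ≤ spikeSum N w := le_sup_right

lemma spikeSum_antitone {w : ℂ} (hw : ‖w‖ ≤ 1) : Antitone fun N => spikeSum N w :=
  antitone_nat_of_succ_le fun N => sup_le_sup_right (by
    rw [Finset.sum_range_succ]
    exact add_le_of_nonpos_right (logSpike_spikeCenter_nonpos N hw)) _

lemma spikeSum_eq_neg_one {N : ℕ} {w : ℂ} (hw : ‖w‖ ≤ 1) (hcore : w ∈ spikeCore N) :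
    spikeSum N w = -1 := by
  obtain ⟨k, hkN, hk⟩ := Set.mem_iUnion₂.1 hcore
  refine sup_eq_right.2 ?_
  rw [← Finset.add_sum_erase _ _ (Finset.mem_range.2 hkN), logSpike_eq_neg_one hk]
  exact add_le_of_nonpos_right (Finset.sum_nonpos fun l _ => logSpike_spikeCenter_nonpos l hw)

lemma neg_pow_le_logSpike_zero (k : ℕ) :
    -(1 / 2 : ℝ) ^ (k + 2) ≤ logSpike (spikeWeight k) (spikeCenter k) 0 := by
  refine le_trans ?_ (mul_log_le_logSpike (spikeWeight_pos k)
    (Complex.ofReal_ne_zero.2 (spikeCenter_pos k).ne').symm)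
  have hlog : -(2 : ℝ) ^ (k + 2) ≤ log (‖(0 : ℂ) - spikeCenter k‖ / 2) := by
    have hcast : ((k + 2 : ℕ) : ℝ) < 2 ^ (k + 2) := by exact_mod_cast (k + 2).lt_two_pow_self
    rw [zero_sub, norm_neg, norm_spikeCenter, spikeCenter, div_eq_mul_one_div, ← pow_succ, log_pow,
      one_div, log_inv]
    nlinarith [log_two_lt_d9, log_two_gt_d9]
  have hprod : spikeWeight k * 2 ^ (k + 2) = (1 / 2) ^ (k + 2) := by
    rw [spikeWeight, ← mul_pow]
    norm_num
  rw [← hprod, ← mul_neg]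
  exact mul_le_mul_of_nonneg_left hlog (spikeWeight_pos k).le

lemma neg_half_le_spikeSum_zero (N : ℕ) : -(1 / 2) ≤ spikeSum N 0 := by
  refine le_sup_of_le_left ?_
  calc -(1 / 2 : ℝ) ≤ -(∑ k ∈ Finset.range N, (1 / 2 : ℝ) ^ (k + 2)) := by
        simp only [pow_add, ← Finset.sum_mul]
        linarith [sum_geometric_two_le N]
    _ = ∑ k ∈ Finset.range N, -(1 / 2 : ℝ) ^ (k + 2) := Finset.sum_neg_distrib _ |>.symm
    _ ≤ _ := Finset.sum_le_sum fun k _ => neg_pow_le_logSpike_zero k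

lemma submeanAt_spikeSum_comp (N : ℕ) {h : ℂ → ℂ} (hh : Differentiable ℂ h) (c : ℂ) :
    SubmeanAt (fun z => spikeSum N (h z)) c :=
  (SubmeanAt.sum fun k _ => submeanAt_logSpike_comp (spikeWeight_pos k) hh c).sup (.const (-1) c)

lemma continuous_spikeSum (N : ℕ) : Continuous (spikeSum N) :=
  continuous_iff_continuousAt.2 fun c =>
    (submeanAt_spikeSum_comp N differentiable_id c).continuousAt

/-! ### The domain and the function -/

/-- The open unit polydisc of `ℂⁿ`. -/
def unitPolydisc (n : ℕ) : Set (EuclideanSpace ℂ (Fin n)) :=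
  {x | ∀ k, ‖x k‖ < 1}

lemma unitPolydisc_eq_preimage_ball (n : ℕ) :
    unitPolydisc n = WithLp.ofLp ⁻¹' ball (0 : Fin n → ℂ) 1 := by
  ext x
  simp [unitPolydisc, pi_norm_lt_iff]

lemma isOpen_unitPolydisc (n : ℕ) : IsOpen (unitPolydisc n) := by
  rw [unitPolydisc_eq_preimage_ball]
  exact isOpen_ball.preimage (PiLp.continuous_ofLp 2 _)

lemma isBounded_unitPolydisc (n : ℕ) : Bornology.IsBounded (unitPolydisc n) := by
  rw [unitPolydisc_eq_preimage_ball]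
  exact (PiLp.antilipschitzWith_ofLp 2 _).isBounded_preimage isBounded_ball

lemma convex_unitPolydisc (n : ℕ) : Convex ℝ (unitPolydisc n) := by
  rw [unitPolydisc_eq_preimage_ball]
  exact (convex_ball 0 1).is_linear_preimage ⟨fun _ _ => rfl, fun _ _ => rfl⟩

/-- The disjoint discs in the `i`-th coordinate over which the function of the example is given by
the spikes. -/
def spikeDiscs : Set ℂ := ⋃ k, ball (spikeCenter k : ℂ) (spikeCenter k / 8)

lemma isOpen_spikeDiscs : IsOpen spikeDiscs := isOpen_iUnion fun _ => isOpen_ball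

lemma spikeCenter_mem_spikeDiscs (k : ℕ) : (spikeCenter k : ℂ) ∈ spikeDiscs :=
  Set.mem_iUnion.2 ⟨k, mem_ball_self (div_pos (spikeCenter_pos k) (by norm_num))⟩

lemma spikeCenter_notMem_frontier (k : ℕ) : (spikeCenter k : ℂ) ∉ frontier spikeDiscs :=
  fun h => (isOpen_spikeDiscs.frontier_eq ▸ h).2 (spikeCenter_mem_spikeDiscs k)

lemma zero_mem_frontier_spikeDiscs : (0 : ℂ) ∈ frontier spikeDiscs := by
  rw [isOpen_spikeDiscs.frontier_eq]
  constructor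
  · exact mem_closure_of_tendsto tendsto_ofReal_spikeCenter (.of_forall spikeCenter_mem_spikeDiscs)
  · simp only [spikeDiscs, Set.mem_iUnion, mem_ball_iff_norm, zero_sub, norm_neg, norm_spikeCenter,
      not_exists, not_lt]
    exact fun k => div_le_self (spikeCenter_pos k).le (by norm_num)

lemma spikeCenter_le_of_lt {j k : ℕ} (hjk : j < k) : spikeCenter k ≤ spikeCenter j / 2 := by
  rw [spikeCenter, spikeCenter, div_eq_mul_one_div (_ ^ _), ← pow_succ]
  exact pow_le_pow_of_le_one (by norm_num) (by norm_num) (by omega)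

-- Consecutive centres are a factor `2` apart, so the other discs stay outside the annulus
-- `9/16 * spikeCenter k < |z| < 7/4 * spikeCenter k`, which contains the sphere.
lemma notMem_closure_spikeDiscs {k : ℕ} {z : ℂ} (hz : ‖z - spikeCenter k‖ = spikeCenter k / 4) :
    z ∉ closure spikeDiscs := by
  set c := spikeCenter k with hc
  have hc0 : 0 < c := spikeCenter_pos k
  let C : Set ℂ := closedBall 0 (9 / 16 * c) ∪ closedBall (c : ℂ) (c / 8) ∪ (ball 0 (7 / 4 * c))ᶜ
  have hC : IsClosed C :=
    (isClosed_closedBall.union isClosed_closedBall).union isOpen_ball.isClosed_compl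
  have hsub : spikeDiscs ⊆ C := Set.iUnion_subset fun j w hw => by
    rw [mem_ball_iff_norm] at hw
    have hnorm := norm_spikeCenter j
    simp only [C, Set.mem_union, Set.mem_compl_iff, mem_closedBall_iff_norm, mem_ball_iff_norm,
      sub_zero, not_lt]
    rcases lt_trichotomy j k with hjk | rfl | hkj
    · have hle := spikeCenter_le_of_lt hjk
      have := norm_sub_norm_le (spikeCenter j : ℂ) w
      rw [norm_sub_rev] at this
      exact .inr (by linarith)
    · exact .inl (.inr hw.le)
    · have hle := spikeCenter_le_of_lt hkj
      have := norm_le_norm_add_norm_sub' w (spikeCenter j)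
      exact .inl (.inl (by linarith))
  intro hmem
  have hzC := closure_minimal hsub hC hmem
  have hnorm := norm_spikeCenter k
  have h₁ := norm_le_norm_add_norm_sub' z c
  have h₂ := norm_sub_norm_le (c : ℂ) z
  rw [norm_sub_rev] at h₂
  simp only [C, Set.mem_union, Set.mem_compl_iff, mem_closedBall_iff_norm, mem_ball_iff_norm,
    sub_zero, not_lt] at hzC
  rcases hzC with (h | h) | h <;> linarith

section Domain

variable {n : ℕ} (i j : Fin n)

/-- The part of the domain in which the boundary of `spikeDiscs` may be crossed only over the cores
of the first `N` spikes. -/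
def spikeStage (N : ℕ) : Set (EuclideanSpace ℂ (Fin n)) :=
  {x ∈ unitPolydisc n | x i ∉ frontier spikeDiscs ∨ x j ∈ spikeCore N}

/-- The bounded domain `Ω` of the example, the spikes living in the coordinates `i` and `j`. -/
def spikeDomain : Set (EuclideanSpace ℂ (Fin n)) := ⋃ N, spikeStage i j N

open Classical in
/-- The `N`-th approximation to the plurisubharmonic function `u` of the example. It is continuous
on `spikeStage i j N`, both expressions being `-1` over the core of the spikes. -/
def spikeApprox (N : ℕ) (x : EuclideanSpace ℂ (Fin n)) : ℝ :=
  if x i ∈ spikeDiscs then spikeSum N (x j) else -1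

/-- The plurisubharmonic function `u` of the example. -/
def spikeLimit (x : EuclideanSpace ℂ (Fin n)) : ℝ := ⨅ N, spikeApprox i j N x

variable {i j}

lemma isOpen_spikeStage (N : ℕ) : IsOpen (spikeStage i j N) := by
  refine (isOpen_unitPolydisc n).inter (IsOpen.union ?_ ?_)
  · exact isClosed_frontier.isOpen_compl.preimage (by fun_prop)
  · exact (isOpen_spikeCore N).preimage (by fun_prop)

lemma spikeStage_mono : Monotone (spikeStage i j) := fun _ _ hMN _ hx =>
  ⟨hx.1, hx.2.imp_right fun h => spikeCore_mono hMN h⟩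

lemma isOpen_spikeDomain : IsOpen (spikeDomain i j) := isOpen_iUnion isOpen_spikeStage

lemma spikeDomain_subset_unitPolydisc : spikeDomain i j ⊆ unitPolydisc n :=
  Set.iUnion_subset fun _ _ hx => hx.1

lemma mem_spikeDomain_of_notMem_frontier {x : EuclideanSpace ℂ (Fin n)} (hx : x ∈ unitPolydisc n)
    (hi : x i ∉ frontier spikeDiscs) : x ∈ spikeDomain i j :=
  Set.mem_iUnion.2 ⟨0, hx, .inl hi⟩

lemma mem_spikeDomain_of_mem_spikeCore {x : EuclideanSpace ℂ (Fin n)} {N : ℕ}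
    (hx : x ∈ unitPolydisc n) (hj : x j ∈ spikeCore N) : x ∈ spikeDomain i j :=
  Set.mem_iUnion.2 ⟨N, hx, .inr hj⟩

lemma spikeApprox_of_mem {x : EuclideanSpace ℂ (Fin n)} (hx : x i ∈ spikeDiscs) (N : ℕ) :
    spikeApprox i j N x = spikeSum N (x j) := if_pos hx

lemma spikeApprox_of_notMem {x : EuclideanSpace ℂ (Fin n)} (hx : x i ∉ spikeDiscs) (N : ℕ) :
    spikeApprox i j N x = -1 := if_neg hx

lemma neg_one_le_spikeApprox (N : ℕ) (x : EuclideanSpace ℂ (Fin n)) :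
    -1 ≤ spikeApprox i j N x := by
  by_cases hx : x i ∈ spikeDiscs
  · exact (neg_one_le_spikeSum N _).trans_eq (spikeApprox_of_mem hx N).symm
  · exact (spikeApprox_of_notMem hx N).ge

lemma spikeApprox_antitone {x : EuclideanSpace ℂ (Fin n)} (hx : x ∈ unitPolydisc n) :
    Antitone fun N => spikeApprox i j N x := by
  by_cases hi : x i ∈ spikeDiscs
  · simpa only [spikeApprox_of_mem hi] using spikeSum_antitone (hx j).le
  · simpa only [spikeApprox_of_notMem hi] using antitone_const

lemma tendsto_spikeApprox {x : EuclideanSpace ℂ (Fin n)} (hx : x ∈ unitPolydisc n) :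
    Tendsto (fun N => spikeApprox i j N x) atTop (𝓝 (spikeLimit i j x)) :=
  tendsto_atTop_ciInf (spikeApprox_antitone hx)
    ⟨-1, Set.forall_mem_range.2 fun N => neg_one_le_spikeApprox N x⟩

lemma spikeApprox_eventuallyEq {N : ℕ} {x : EuclideanSpace ℂ (Fin n)} (hx : x ∈ spikeStage i j N) :
    spikeApprox i j N =ᶠ[𝓝 x] (fun z => spikeSum N (z j)) ∨
      spikeApprox i j N =ᶠ[𝓝 x] fun _ => -1 := by
  have hi : ContinuousAt (fun z : EuclideanSpace ℂ (Fin n) => z i) x := by fun_prop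
  have hj : ContinuousAt (fun z : EuclideanSpace ℂ (Fin n) => z j) x := by fun_prop
  rcases hx.2 with hfront | hcore
  · by_cases hmem : x i ∈ spikeDiscs
    · left
      filter_upwards [hi.eventually_mem (isOpen_spikeDiscs.mem_nhds hmem)] with z hz
      exact spikeApprox_of_mem hz N
    · have hclosure : x i ∈ (closure spikeDiscs)ᶜ := fun h =>
        hfront (isOpen_spikeDiscs.frontier_eq ▸ ⟨h, hmem⟩)
      right
      filter_upwards [hi.eventually_mem (isClosed_closure.isOpen_compl.mem_nhds hclosure)] with z hz
      exact spikeApprox_of_notMem (fun h => hz (subset_closure h)) N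
  · right
    filter_upwards [hj.eventually_mem ((isOpen_spikeCore N).mem_nhds hcore),
      (isOpen_unitPolydisc n).mem_nhds hx.1] with z hz hzpoly
    by_cases hmem : z i ∈ spikeDiscs
    · rw [spikeApprox_of_mem hmem, spikeSum_eq_neg_one (hzpoly j).le hz]
    · exact spikeApprox_of_notMem hmem N

lemma continuousOn_spikeApprox (N : ℕ) : ContinuousOn (spikeApprox i j N) (spikeStage i j N) := by
  intro x hx
  rcases spikeApprox_eventuallyEq hx with h | h
  · have hcont : Continuous fun z : EuclideanSpace ℂ (Fin n) => spikeSum N (z j) :=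
      (continuous_spikeSum N).comp (by fun_prop)
    exact (hcont.continuousAt.congr h.symm).continuousWithinAt
  · exact (continuousAt_const.congr h.symm).continuousWithinAt

lemma submeanAt_spikeApprox_line {N : ℕ} {a b : EuclideanSpace ℂ (Fin n)} {l : ℂ}
    (hl : a + l • b ∈ spikeStage i j N) :
    SubmeanAt (fun w => spikeApprox i j N (a + w • b)) l := by
  have hline : Tendsto (fun w : ℂ => a + w • b) (𝓝 l) (𝓝 (a + l • b)) :=
    Continuous.tendsto (by fun_prop) l
  rcases spikeApprox_eventuallyEq hl with h | h
  · have hcoord : Differentiable ℂ fun w : ℂ => (a + w • b) j := by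
      simp only [PiLp.add_apply, PiLp.smul_apply, smul_eq_mul]
      fun_prop
    exact (submeanAt_spikeSum_comp N hcoord l).congr (h.comp_tendsto hline)
  · exact (SubmeanAt.const (-1) l).congr (h.comp_tendsto hline)

lemma isPSHOn_spikeLimit : IsPSHOn (spikeDomain i j) fun x => (spikeLimit i j x : EReal) :=
  isPSHOn_iUnion_of_tendsto isOpen_spikeStage spikeStage_mono continuousOn_spikeApprox
    (fun _ _ _ _ => submeanAt_spikeApprox_line)
    (fun _ hz => spikeApprox_antitone (spikeDomain_subset_unitPolydisc hz))
    (fun _ hz => (continuous_coe_real_ereal.tendsto _).comp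
      (tendsto_spikeApprox (spikeDomain_subset_unitPolydisc hz)))
    fun z hz => ⟨z, mem_connectedComponentIn hz, EReal.coe_ne_bot _⟩

lemma joinedIn_spikeDomain_of_left_eq {x y : EuclideanSpace ℂ (Fin n)} (hx : x ∈ unitPolydisc n)
    (hy : y ∈ unitPolydisc n) (hi : x i ∉ frontier spikeDiscs) (hxy : y i = x i) :
    JoinedIn (spikeDomain i j) x y := by
  refine JoinedIn.of_segment_subset ?_
  rintro _ ⟨s, t, hs, ht, hst, rfl⟩
  refine mem_spikeDomain_of_notMem_frontier (convex_unitPolydisc n hx hy hs ht hst) ?_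
  rwa [PiLp.add_apply, PiLp.smul_apply, PiLp.smul_apply, hxy, Convex.combo_self hst]

lemma joinedIn_spikeDomain_of_right_eq {x y : EuclideanSpace ℂ (Fin n)} {N : ℕ}
    (hx : x ∈ unitPolydisc n) (hy : y ∈ unitPolydisc n) (hj : x j ∈ spikeCore N)
    (hxy : y j = x j) : JoinedIn (spikeDomain i j) x y := by
  refine JoinedIn.of_segment_subset ?_
  rintro _ ⟨s, t, hs, ht, hst, rfl⟩
  refine mem_spikeDomain_of_mem_spikeCore (convex_unitPolydisc n hx hy hs ht hst) (N := N) ?_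
  rwa [PiLp.add_apply, PiLp.smul_apply, PiLp.smul_apply, hxy, Convex.combo_self hst]

variable (i j) in
/-- The embedding of `ℂ²` in `ℂⁿ` as the coordinate plane of the coordinates `i` and `j`. -/
def coordPlane : ℂ × ℂ →L[ℂ] EuclideanSpace ℂ (Fin n) :=
  (ContinuousLinearMap.toSpanSingleton ℂ (EuclideanSpace.single i 1)).coprod
    (ContinuousLinearMap.toSpanSingleton ℂ (EuclideanSpace.single j 1))

lemma coordPlane_apply (z w : ℂ) (k : Fin n) :
    coordPlane i j (z, w) k = (if k = i then z else 0) + if k = j then w else 0 := by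
  simp [coordPlane]

lemma coordPlane_left (hij : i ≠ j) (z w : ℂ) : coordPlane i j (z, w) i = z := by
  simp [coordPlane_apply, hij]

lemma coordPlane_right (hij : i ≠ j) (z w : ℂ) : coordPlane i j (z, w) j = w := by
  simp [coordPlane_apply, hij.symm]

lemma coordPlane_mem_unitPolydisc (hij : i ≠ j) {z w : ℂ} (hz : ‖z‖ < 1) (hw : ‖w‖ < 1) :
    coordPlane i j (z, w) ∈ unitPolydisc n := fun k => by
  rw [coordPlane_apply]
  split_ifs with hki hkj hkj
  · exact absurd (hki.symm.trans hkj) hij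
  all_goals simp [hz, hw]

lemma isConnected_spikeDomain (hij : i ≠ j) : IsConnected (spikeDomain i j) := by
  let c : ℂ := spikeCenter 0
  have hc : ‖c‖ < 1 := norm_spikeCenter_lt_one 0
  have hcfront : c ∉ frontier spikeDiscs := spikeCenter_notMem_frontier 0
  have hbase := coordPlane_mem_unitPolydisc hij hc hc
  refine IsPathConnected.isConnected
    ⟨coordPlane i j (c, c), mem_spikeDomain_of_notMem_frontier hbase ?_, fun {x} hx => ?_⟩
  · rwa [coordPlane_left hij]
  obtain ⟨N, hpoly, hi | hj⟩ := Set.mem_iUnion.1 hx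
  · have hmid := coordPlane_mem_unitPolydisc hij (hpoly i) hc
    refine ((joinedIn_spikeDomain_of_left_eq hpoly hmid hi (coordPlane_left hij _ _)).trans
      (joinedIn_spikeDomain_of_right_eq (N := 1) hmid hbase ?_ ?_)).symm
    · rw [coordPlane_right hij]
      exact spikeCenter_mem_spikeCore 0
    · rw [coordPlane_right hij, coordPlane_right hij]
  · have hmid := coordPlane_mem_unitPolydisc hij hc (hpoly j)
    refine ((joinedIn_spikeDomain_of_right_eq hpoly hmid hj (coordPlane_right hij _ _)).trans
      (joinedIn_spikeDomain_of_left_eq hmid hbase ?_ ?_)).symm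
    · rwa [coordPlane_left hij]
    · rw [coordPlane_left hij, coordPlane_left hij]

lemma coordPlane_spikeCenter_zero_mem_spikeDomain (hij : i ≠ j) (k : ℕ) :
    coordPlane i j (spikeCenter k, 0) ∈ spikeDomain i j := by
  refine mem_spikeDomain_of_notMem_frontier (coordPlane_mem_unitPolydisc hij
    (norm_spikeCenter_lt_one k) (norm_zero.trans_lt one_pos)) ?_
  rw [coordPlane_left hij]
  exact spikeCenter_notMem_frontier k

lemma zero_mem_frontier_spikeDomain (hij : i ≠ j) : 0 ∈ frontier (spikeDomain i j) := by
  rw [isOpen_spikeDomain.frontier_eq]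
  constructor
  · have hlim := ((coordPlane i j).continuous.tendsto (0, 0)).comp
      (tendsto_ofReal_spikeCenter.prodMk_nhds tendsto_const_nhds)
    rw [Prod.mk_zero_zero, map_zero] at hlim
    exact mem_closure_of_tendsto hlim (.of_forall (coordPlane_spikeCenter_zero_mem_spikeDomain hij))
  · intro h
    obtain ⟨N, -, hi | hj⟩ := Set.mem_iUnion.1 h
    · exact hi zero_mem_frontier_spikeDiscs
    · exact zero_notMem_spikeCore N hj

lemma neg_half_le_spikeLimit (hij : i ≠ j) (k : ℕ) :
    -(1 / 2) ≤ spikeLimit i j (coordPlane i j (spikeCenter k, 0)) := by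
  refine le_ciInf fun N => ?_
  have hi : coordPlane i j (spikeCenter k, 0) i ∈ spikeDiscs := by
    rw [coordPlane_left hij]
    exact spikeCenter_mem_spikeDiscs k
  rw [spikeApprox_of_mem hi, coordPlane_right hij]
  exact neg_half_le_spikeSum_zero N

lemma spikeLimit_of_notMem {x : EuclideanSpace ℂ (Fin n)} (hx : x i ∉ spikeDiscs) :
    spikeLimit i j x = -1 := by
  simp only [spikeLimit, spikeApprox_of_notMem hx, ciInf_const]

lemma coordPlane_add_smul (z w c l : ℂ) :
    coordPlane i j (z, w) + l • coordPlane i j (c, 0) = coordPlane i j (z + l * c, w) := by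
  rw [← map_smul, ← map_add]
  simp

lemma exists_coordPlane_mem_of_mem_nhds {U : Set (EuclideanSpace ℂ (Fin n))} (hU : U ∈ 𝓝 0) :
    ∃ k : ℕ, ∀ z w : ℂ, ‖z‖ ≤ 2 * spikeCenter k → ‖w‖ ≤ 2 * spikeCenter k →
      coordPlane i j (z, w) ∈ U := by
  have hpre : coordPlane i j ⁻¹' U ∈ 𝓝 (0 : ℂ × ℂ) :=
    (coordPlane i j).continuous.continuousAt (by rwa [map_zero])
  obtain ⟨ρ, hρ, hball⟩ := Metric.mem_nhds_iff.1 hpre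
  have hlim : Tendsto (fun k => 2 * spikeCenter k) atTop (𝓝 0) := by
    simpa only [mul_zero] using tendsto_spikeCenter.const_mul 2
  obtain ⟨k, hk⟩ := (hlim.eventually_lt_const hρ).exists
  exact ⟨k, fun z w hz hw => hball (mem_ball_zero_iff.2
    (Prod.norm_mk z w ▸ max_lt (hz.trans_lt hk) (hw.trans_lt hk)))⟩

lemma norm_spikeCenter_add_mul_le (k : ℕ) {l : ℂ} (hl : ‖l‖ ≤ 1) :
    ‖(spikeCenter k : ℂ) + l * (spikeCenter k / 4)‖ ≤ 5 / 4 * spikeCenter k := by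
  have hc := spikeCenter_pos k
  refine (norm_add_le _ _).trans ?_
  rw [norm_mul, norm_div, norm_spikeCenter, Complex.norm_ofNat]
  nlinarith

lemma coordPlane_spikeCenter_add_mul_mem_unitPolydisc (hij : i ≠ j) (k : ℕ) {l w : ℂ}
    (hl : ‖l‖ ≤ 1) (hw : ‖w‖ < 1) :
    coordPlane i j (spikeCenter k + l * (spikeCenter k / 4), w) ∈ unitPolydisc n :=
  coordPlane_mem_unitPolydisc hij
    (by linarith [norm_spikeCenter_add_mul_le k hl, spikeCenter_le_half k]) hw

lemma coordPlane_spikeCenter_add_mul_mem_spikeDomain (hij : i ≠ j) (k m : ℕ) {l : ℂ}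
    (hl : ‖l‖ ≤ 1) :
    coordPlane i j (spikeCenter k + l * (spikeCenter k / 4), spikeCenter m) ∈ spikeDomain i j := by
  refine mem_spikeDomain_of_mem_spikeCore (N := m + 1)
    (coordPlane_spikeCenter_add_mul_mem_unitPolydisc hij k hl (norm_spikeCenter_lt_one m)) ?_
  rw [coordPlane_right hij]
  exact spikeCenter_mem_spikeCore m

lemma coordPlane_circle_notMem_closure (hij : i ≠ j) (k : ℕ) {l w : ℂ} (hl : ‖l‖ = 1) :
    coordPlane i j (spikeCenter k + l * (spikeCenter k / 4), w) i ∉ closure spikeDiscs := by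
  rw [coordPlane_left hij]
  refine notMem_closure_spikeDiscs (k := k) ?_
  rw [add_sub_cancel_left, norm_mul, norm_div, norm_spikeCenter, Complex.norm_ofNat, hl, one_mul]

lemma coordPlane_circle_mem_spikeDomain (hij : i ≠ j) (k : ℕ) {l w : ℂ} (hl : ‖l‖ = 1)
    (hw : ‖w‖ < 1) :
    coordPlane i j (spikeCenter k + l * (spikeCenter k / 4), w) ∈ spikeDomain i j :=
  mem_spikeDomain_of_notMem_frontier
    (coordPlane_spikeCenter_add_mul_mem_unitPolydisc hij k hl.le hw)
    fun h => coordPlane_circle_notMem_closure hij k hl (frontier_subset_closure h)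

lemma spikeLimit_coordPlane_circle (hij : i ≠ j) (k : ℕ) {l w : ℂ} (hl : ‖l‖ = 1) :
    spikeLimit i j (coordPlane i j (spikeCenter k + l * (spikeCenter k / 4), w)) = -1 :=
  spikeLimit_of_notMem fun h => coordPlane_circle_notMem_closure hij k hl (subset_closure h)

lemma not_exists_antitone_isPSHOn_tendsto_spikeLimit (hij : i ≠ j)
    {U : Set (EuclideanSpace ℂ (Fin n))} (hU : IsOpen U) (h0 : 0 ∈ U) :
    ¬ ∃ v : ℕ → EuclideanSpace ℂ (Fin n) → ℝ,
      (∀ k, ContinuousOn (v k) (spikeDomain i j ∩ U)) ∧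
      (∀ k, IsPSHOn (spikeDomain i j ∩ U) fun z => (v k z : EReal)) ∧
      (∀ z ∈ spikeDomain i j ∩ U, Antitone fun k => v k z) ∧
      ∀ z ∈ spikeDomain i j ∩ U,
        Tendsto (fun k => (v k z : EReal)) atTop (𝓝 (spikeLimit i j z : EReal)) := by
  rintro ⟨v, hcont, hpsh, hanti, hlim⟩
  obtain ⟨k, hkU⟩ := exists_coordPlane_mem_of_mem_nhds (i := i) (j := j) (hU.mem_nhds h0)
  have hk := spikeCenter_pos k
  let c : ℂ := spikeCenter k
  have hdiscU : ∀ l w : ℂ, ‖l‖ ≤ 1 → ‖w‖ ≤ spikeCenter k →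
      coordPlane i j (c + l * (c / 4), w) ∈ U := fun l w hl hw =>
    hkU _ _ (by linarith [norm_spikeCenter_add_mul_le k hl]) (by linarith)
  have hcenters : Tendsto (fun m => coordPlane i j (c, spikeCenter m)) atTop
      (𝓝 (coordPlane i j (c, 0))) :=
    ((coordPlane i j).continuous.tendsto (c, 0)).comp
      (tendsto_const_nhds.prodMk_nhds tendsto_ofReal_spikeCenter)
  have hle : (spikeLimit i j (coordPlane i j (c, 0)) : EReal) ≤ (-(3 / 4) : ℝ) := by
    refine le_of_tendsto_discs_of_antitone (b := coordPlane i j (c / 4, 0))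
      (isOpen_spikeDomain.inter hU) hpsh hcont hanti hlim
      ⟨coordPlane_spikeCenter_zero_mem_spikeDomain hij k, ?_⟩ (fun l hl => ?_) hcenters ?_
    · simpa using hdiscU 0 0 (by simp) (by simpa using hk.le)
    · rw [mem_sphere_zero_iff_norm] at hl
      rw [coordPlane_add_smul]
      refine ⟨⟨coordPlane_circle_mem_spikeDomain hij k hl (norm_zero.trans_lt one_pos),
        hdiscU l 0 hl.le (norm_zero.trans_le hk.le)⟩, EReal.coe_lt_coe_iff.2 ?_⟩
      exact (spikeLimit_coordPlane_circle hij k hl).trans_lt (by norm_num)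
    · filter_upwards [tendsto_spikeCenter.eventually_le_const hk] with m hm l hl
      rw [coordPlane_add_smul]
      exact ⟨coordPlane_spikeCenter_add_mul_mem_spikeDomain hij k m hl,
        hdiscU l _ hl ((norm_spikeCenter m).trans_le hm)⟩
  linarith [EReal.coe_le_coe_iff.1 hle, neg_half_le_spikeLimit hij k]

end Domain

theorem exists_domain_psh_not_locally_smoothable_general {n : ℕ} (hn : 2 ≤ n) :
    ∃ (Ω : Set (EuclideanSpace ℂ (Fin n))) (u : EuclideanSpace ℂ (Fin n) → ℝ),
      IsOpen Ω ∧ IsConnected Ω ∧ Bornology.IsBounded Ω ∧ 0 ∈ frontier Ω ∧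
      IsPSHOn Ω (fun z => (u z : EReal)) ∧
      ∀ U : Set (EuclideanSpace ℂ (Fin n)), IsOpen U → 0 ∈ U →
        ¬ ∃ v : ℕ → EuclideanSpace ℂ (Fin n) → ℝ,
            (∀ k, ContinuousOn (v k) (Ω ∩ U)) ∧
            (∀ k, IsPSHOn (Ω ∩ U) fun z => (v k z : EReal)) ∧
            (∀ z ∈ Ω ∩ U, Antitone fun k => v k z) ∧
            ∀ z ∈ Ω ∩ U, Tendsto (fun k => (v k z : EReal)) atTop (𝓝 (u z : EReal)) := by
  have hij : (⟨0, by omega⟩ : Fin n) ≠ ⟨1, by omega⟩ := by simp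
  exact ⟨spikeDomain _ _, spikeLimit _ _, isOpen_spikeDomain, isConnected_spikeDomain hij,
    (isBounded_unitPolydisc n).subset spikeDomain_subset_unitPolydisc,
    zero_mem_frontier_spikeDomain hij, isPSHOn_spikeLimit,
    fun _ hU h0 => not_exists_antitone_isPSHOn_tendsto_spikeLimit hij hU h0⟩

/-- **Theorem 3 (Example).** For every `n ≥ 2` there exist a bounded domain `Ω ⊆ ℂⁿ` with
`0 ∈ ∂Ω` and a plurisubharmonic function `u` on `Ω` such that for every neighbourhood `U`
of `0` there is no sequence of smooth plurisubharmonic functions on `Ω ∩ U` decreasing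
pointwise to `u` on `Ω ∩ U`. -/
theorem exists_domain_psh_not_locally_smoothable {n : ℕ} (hn : 2 ≤ n) :
    ∃ (Ω : Set (EuclideanSpace ℂ (Fin n))) (u : EuclideanSpace ℂ (Fin n) → EReal),
      IsOpen Ω ∧ IsConnected Ω ∧ Bornology.IsBounded Ω ∧
      (0 : EuclideanSpace ℂ (Fin n)) ∈ frontier Ω ∧
      IsPSHOn Ω u ∧
      ∀ U : Set (EuclideanSpace ℂ (Fin n)), IsOpen U → (0 : EuclideanSpace ℂ (Fin n)) ∈ U →
        ¬ ∃ v : ℕ → EuclideanSpace ℂ (Fin n) → ℝ,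
            (∀ k, ContDiffOn ℝ (⊤ : ℕ∞) (v k) (Ω ∩ U)) ∧
            (∀ k, IsPSHOn (Ω ∩ U) (fun z => ((v k z : ℝ) : EReal))) ∧
            (∀ k, ∀ z ∈ Ω ∩ U, v (k+1) z ≤ v k z) ∧
            (∀ z ∈ Ω ∩ U, Tendsto (fun k => ((v k z : ℝ) : EReal)) atTop (nhds (u z))) := by
  obtain ⟨Ω, u, hopen, hconn, hbdd, hzero, hpsh, hno⟩ :=
    exists_domain_psh_not_locally_smoothable_general hn
  refine ⟨Ω, fun z => u z, hopen, hconn, hbdd, hzero, hpsh, ?_⟩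
  rintro U hU h0 ⟨v, hsmooth, hv, hle, hlim⟩
  exact hno U hU h0 ⟨v, fun k => (hsmooth k).continuousOn, hv,
    fun z hz => antitone_nat_of_succ_le fun k => hle k z hz, hlim⟩
end
end
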